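/- arXiv:1812.04086 — 8 statements merged into one kernel-verified Lean document; each statement's English description precedes it below -/
import Mathlib

section
/- Let T > 0 be finite and Γ : [0,T] ⇒ ℝ^d a closed convex-valued mapping such that int Γ_t ≠ ∅ for all t ∈ [0,T] and int ⃗Γ_t ≠ ∅ for all t ∈ (0,T]. Then Γ_t = cl{y_t | y ∈ D(Γ)} for all t ∈ [0,T] if and only if Γ is right-inner semicontinuous. In that case, ⃗Γ is left-inner semicontinuous and ⃗Γ_t = cl{y_{t-} | y ∈ D(Γ)} for every t ∈ (0,T]. -/
open MeasureTheory Filter Set Topology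
open scoped ENNReal Classical

/-- Euclidean space `ℝ^d`. -/
abbrev Euc (d : ℕ) := EuclideanSpace ℝ (Fin d)

/-- A sequence in `[0,T]` increasing strictly to `t` from the left. -/
def SeqToLeft (t : ℝ) (s : ℕ → ℝ) : Prop :=
  StrictMono s ∧ (∀ n, 0 ≤ s n ∧ s n < t) ∧ Tendsto s atTop (𝓝 t)

/-- A sequence in `[0,T]` decreasing strictly to `t` from the right. -/
def SeqToRight (T t : ℝ) (s : ℕ → ℝ) : Prop :=
  StrictAnti s ∧ (∀ n, t < s n ∧ s n ≤ T) ∧ Tendsto s atTop (𝓝 t)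

/-- `liminf_{s↑↑t} Γ_s`: the points `x` with `dist(x,Γ_{s_n}) → 0` along every strictly
increasing sequence `s_n → t`. -/
def leftLiminfSV {d : ℕ} (Γ : ℝ → Set (Euc d)) (t : ℝ) : Set (Euc d) :=
  {x | ∀ s : ℕ → ℝ, SeqToLeft t s →
    Tendsto (fun n => Metric.infDist x (Γ (s n))) atTop (𝓝 0)}

/-- `limsup_{s↑↑t} Γ_s`: the points `x` which are limits of points `x_n ∈ Γ_{s_n}` along
some strictly increasing sequence `s_n → t`. -/
def leftLimsupSV {d : ℕ} (Γ : ℝ → Set (Euc d)) (t : ℝ) : Set (Euc d) :=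
  {x | ∃ s : ℕ → ℝ, SeqToLeft t s ∧
    ∃ xn : ℕ → Euc d, (∀ n, xn n ∈ Γ (s n)) ∧ Tendsto xn atTop (𝓝 x)}

/-- `liminf_{s↓↓t} Γ_s`. -/
def rightLiminfSV {d : ℕ} (T : ℝ) (Γ : ℝ → Set (Euc d)) (t : ℝ) : Set (Euc d) :=
  {x | ∀ s : ℕ → ℝ, SeqToRight T t s →
    Tendsto (fun n => Metric.infDist x (Γ (s n))) atTop (𝓝 0)}

/-- `limsup_{s↓↓t} Γ_s`. -/
def rightLimsupSV {d : ℕ} (T : ℝ) (Γ : ℝ → Set (Euc d)) (t : ℝ) : Set (Euc d) :=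
  {x | ∃ s : ℕ → ℝ, SeqToRight T t s ∧
    ∃ xn : ℕ → Euc d, (∀ n, xn n ∈ Γ (s n)) ∧ Tendsto xn atTop (𝓝 x)}

/-- The mapping `⃗Γ` of left limits: `⃗Γ_0 = {0}` and `⃗Γ_t = liminf_{s↑↑t} Γ_s`. -/
def vecSV {d : ℕ} (Γ : ℝ → Set (Euc d)) (t : ℝ) : Set (Euc d) :=
  if t ≤ 0 then {0} else leftLiminfSV Γ t

/-- `Γ` is right-inner semicontinuous on `[0,T]`: the preimage of every open set is open
in the topology `τ_r` generated by the right-open intervals (stated via the basic open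
balls). -/
def RightIscSV (T : ℝ) {d : ℕ} (Γ : ℝ → Set (Euc d)) : Prop :=
  ∀ t ∈ Set.Icc (0:ℝ) T, ∀ x ∈ Γ t, ∀ ε > (0:ℝ), ∃ δ > (0:ℝ),
    ∀ s ∈ Set.Icc (0:ℝ) T, t ≤ s → s < t + δ → ∃ x' ∈ Γ s, dist x' x < ε

/-- `Γ` is left-inner semicontinuous on `[0,T]`. -/
def LeftIscSV (T : ℝ) {d : ℕ} (Γ : ℝ → Set (Euc d)) : Prop :=
  ∀ t ∈ Set.Icc (0:ℝ) T, ∀ x ∈ Γ t, ∀ ε > (0:ℝ), ∃ δ > (0:ℝ),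
    ∀ s ∈ Set.Icc (0:ℝ) T, s ≤ t → t - δ < s → ∃ x' ∈ Γ s, dist x' x < ε

/-- `Γ` is right-outer semicontinuous on `[0,T]`: its graph is closed in the product of
`τ_r` and the Euclidean topology (stated sequentially). -/
def RightOscSV (T : ℝ) {d : ℕ} (Γ : ℝ → Set (Euc d)) : Prop :=
  ∀ t ∈ Set.Icc (0:ℝ) T, ∀ (s : ℕ → ℝ) (xn : ℕ → Euc d) (x : Euc d),
    (∀ n, s n ∈ Set.Icc (0:ℝ) T ∧ t ≤ s n) → Tendsto s atTop (𝓝 t) →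
    (∀ n, xn n ∈ Γ (s n)) → Tendsto xn atTop (𝓝 x) → x ∈ Γ t

/-- `Γ` is left-outer semicontinuous on `[0,T]`. -/
def LeftOscSV (T : ℝ) {d : ℕ} (Γ : ℝ → Set (Euc d)) : Prop :=
  ∀ t ∈ Set.Icc (0:ℝ) T, ∀ (s : ℕ → ℝ) (xn : ℕ → Euc d) (x : Euc d),
    (∀ n, s n ∈ Set.Icc (0:ℝ) T ∧ s n ≤ t) → Tendsto s atTop (𝓝 t) →
    (∀ n, xn n ∈ Γ (s n)) → Tendsto xn atTop (𝓝 x) → x ∈ Γ t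

/-- `Γ` has limits from the left on `(0,T]`. -/
def LagSV (T : ℝ) {d : ℕ} (Γ : ℝ → Set (Euc d)) : Prop :=
  ∀ t ∈ Set.Ioc (0:ℝ) T, leftLiminfSV Γ t = leftLimsupSV Γ t

/-- `Γ` has limits from the right on `[0,T)`. -/
def LadSV (T : ℝ) {d : ℕ} (Γ : ℝ → Set (Euc d)) : Prop :=
  ∀ t ∈ Set.Ico (0:ℝ) T, rightLiminfSV T Γ t = rightLimsupSV T Γ t

/-- A càdlàg set-valued mapping: right-continuous (right-isc and right-osc) with limits
from the left. -/
def CadlagSV (T : ℝ) {d : ℕ} (Γ : ℝ → Set (Euc d)) : Prop :=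
  RightIscSV T Γ ∧ RightOscSV T Γ ∧ LagSV T Γ

/-- A càglàd set-valued mapping: left-continuous (left-isc and left-osc) with limits
from the right. -/
def CagladSV (T : ℝ) {d : ℕ} (Γ : ℝ → Set (Euc d)) : Prop :=
  LeftIscSV T Γ ∧ LeftOscSV T Γ ∧ LadSV T Γ

/-- A function `[0,T] → ℝ^d` (modelled on `ℝ`) is càdlàg: right-continuous on `[0,T)`
with left limits on `(0,T]`. -/
def IsCadlagOn (T : ℝ) {d : ℕ} (y : ℝ → Euc d) : Prop :=
  (∀ t ∈ Set.Ico (0:ℝ) T, Tendsto y (𝓝[>] t) (𝓝 (y t))) ∧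
  (∀ t ∈ Set.Ioc (0:ℝ) T, ∃ l, Tendsto y (𝓝[<] t) (𝓝 l))

/-- The left-limit evaluation `y_{t-}`, with the convention `y_{0-} := 0`. -/
noncomputable def lmod {d : ℕ} (y : ℝ → Euc d) (t : ℝ) : Euc d :=
  if t ≤ 0 then 0 else Function.leftLim y t

def LI {d : ℕ} (l : Filter ℝ) (K : ℝ → Set (Euc d)) : Set (Euc d) :=
  {x | ∀ ε > (0:ℝ), ∀ᶠ s in l, ∃ k ∈ K s, dist k x < ε}

lemma mem_of_near {d : ℕ} {K : Set (Euc d)} (hc : IsClosed K) (hv : Convex ℝ K)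
    {x : Euc d} {r : ℝ} (hr : 0 < r)
    (h : ∀ p ∈ Metric.closedBall x r, ∃ k ∈ K, dist k p < r) : x ∈ K := by
  by_contra hx
  obtain ⟨k1, hk1, -⟩ := h x (Metric.mem_closedBall_self hr.le)
  obtain ⟨k0, hk0, hmin⟩ := exists_norm_eq_iInf_of_complete_convex ⟨k1, hk1⟩ hc.isComplete hv x
  have hin := (norm_eq_iInf_iff_real_inner_le_zero hv hk0).1 hmin
  have hne : x - k0 ≠ 0 := by
    intro h0
    rw [sub_eq_zero] at h0
    exact hx (h0 ▸ hk0)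
  have hpos : 0 < ‖x - k0‖ := norm_pos_iff.2 hne
  obtain ⟨k, hk, hkd⟩ := h (x + (r / ‖x - k0‖) • (x - k0)) (by
    rw [Metric.mem_closedBall, dist_eq_norm, add_sub_cancel_left, norm_smul, norm_div, norm_norm,
      Real.norm_of_nonneg hr.le, div_mul_cancel₀ _ hpos.ne'])
  have h1 := hin k hk
  have h2 := real_inner_le_norm ((x + (r / ‖x - k0‖) • (x - k0)) - k) (x - k0)
  rw [dist_comm, dist_eq_norm] at hkd
  have h3 : inner ℝ ((x + (r / ‖x - k0‖) • (x - k0)) - k) (x - k0)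
      = r * ‖x - k0‖ + ‖x - k0‖ ^ 2 - inner ℝ (x - k0) (k - k0) := by
    have : (x + (r / ‖x - k0‖) • (x - k0)) - k
        = (r / ‖x - k0‖) • (x - k0) + (x - k0) - (k - k0) := by abel
    rw [this, inner_sub_left, inner_add_left, real_inner_smul_left, real_inner_self_eq_norm_sq,
      real_inner_comm (x - k0) (k - k0)]
    field_simp
  nlinarith

lemma LI_closed {d : ℕ} (l : Filter ℝ) (K : ℝ → Set (Euc d)) : IsClosed (LI l K) := by
  rw [← isSeqClosed_iff_isClosed]
  intro u x hu hx ε hε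
  obtain ⟨n, hn⟩ := ((Metric.tendsto_nhds.1 hx) (ε/2) (by linarith)).exists
  filter_upwards [hu n (ε/2) (by linarith)] with s ⟨k, hk, hd⟩
  exact ⟨k, hk, by linarith [dist_triangle k (u n) x]⟩

lemma LI_convex {d : ℕ} (l : Filter ℝ) (K : ℝ → Set (Euc d)) (hK : ∀ᶠ s in l, Convex ℝ (K s)) :
    Convex ℝ (LI l K) := by
  intro x hx y hy a b ha hb hab ε hε
  filter_upwards [hK, hx ε hε, hy ε hε] with s hs ⟨k, hk, hd⟩ ⟨m, hm, he⟩
  refine ⟨a • k + b • m, hs hk hm ha hb hab, ?_⟩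
  rw [dist_eq_norm] at *
  have h1 : a • k + b • m - (a • x + b • y) = a • (k - x) + b • (m - y) := by module
  rw [h1]
  have h2 := norm_add_le (a • (k - x)) (b • (m - y))
  rw [norm_smul, norm_smul, Real.norm_of_nonneg ha, Real.norm_of_nonneg hb] at h2
  have hmx : max ‖k - x‖ ‖m - y‖ < ε := max_lt hd he
  have h3 := mul_le_mul_of_nonneg_left (le_max_left ‖k - x‖ ‖m - y‖) ha
  have h4 := mul_le_mul_of_nonneg_left (le_max_right ‖k - x‖ ‖m - y‖) hb
  have h5 : a * max ‖k - x‖ ‖m - y‖ + b * max ‖k - x‖ ‖m - y‖ = max ‖k - x‖ ‖m - y‖ := by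
    rw [← add_mul, hab, one_mul]
  linarith

lemma LI_int {d : ℕ} (l : Filter ℝ) (K : ℝ → Set (Euc d))
    (hK : ∀ᶠ s in l, IsClosed (K s) ∧ Convex ℝ (K s)) {x : Euc d}
    (hx : x ∈ interior (LI l K)) : ∀ᶠ s in l, x ∈ K s := by
  obtain ⟨r, hr, hsub⟩ := Metric.nhds_basis_closedBall.mem_iff.1 (mem_interior_iff_mem_nhds.1 hx)
  obtain ⟨F, hF, hfin, hcov⟩ := (isCompact_closedBall x r).finite_cover_balls
    (show 0 < r/2 by linarith)
  have h1 : ∀ᶠ s in l, ∀ p ∈ F, ∃ k ∈ K s, dist k p < r/2 :=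
    (hfin.eventually_all).2 fun p hp => hsub (hF hp) (r/2) (by linarith)
  filter_upwards [hK, h1] with s ⟨hc, hv⟩ hs
  refine mem_of_near hc hv hr fun p hp => ?_
  obtain ⟨q, hq, hpq⟩ := mem_iUnion₂.1 (hcov hp)
  obtain ⟨k, hk, hd⟩ := hs q hq
  rw [Metric.mem_ball, dist_comm] at hpq
  exact ⟨k, hk, by linarith [dist_triangle k q p]⟩

lemma leftLiminf_eq {d : ℕ} {T : ℝ} (Γ : ℝ → Set (Euc d))
    (hne : ∀ t ∈ Set.Icc (0:ℝ) T, (Γ t).Nonempty) {t : ℝ} (ht : t ∈ Ioc 0 T) :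
    leftLiminfSV Γ t = LI (𝓝[<] t) Γ := by
  ext x
  constructor
  · intro hx
    by_contra hcon
    simp only [LI, Set.mem_ofPred_eq, not_forall] at hcon
    obtain ⟨ε, hε, hfr⟩ := hcon
    have hstep : ∀ a < t, ∃ s, a < s ∧ 0 ≤ s ∧ s < t ∧ ¬ ∃ k ∈ Γ s, dist k x < ε := by
      intro a ha
      by_contra hno
      push Not at hno
      apply hfr
      filter_upwards [Ioo_mem_nhdsLT (max_lt ha ht.1)] with s hs
      exact hno s ((le_max_left _ _).trans_lt hs.1) ((le_max_right _ _).trans hs.1.le) hs.2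
    have hstep2 : ∀ a : Iio t, ∃ s : Iio t, (a:ℝ) < s ∧ (t + a)/2 < s ∧ 0 ≤ (s:ℝ) ∧
        ¬ ∃ k ∈ Γ s, dist k x < ε := by
      rintro ⟨a, ha⟩
      simp only [mem_Iio] at ha
      obtain ⟨s, h1, h2, h3, h4⟩ := hstep ((t + a)/2) (by linarith)
      exact ⟨⟨s, h3⟩, by simp only; linarith, h1, h2, h4⟩
    choose f hf using hstep2
    let u : ℕ → Iio t := fun n => Nat.rec (f ⟨0, ht.1⟩) (fun _ a => f a) n
    have hu0 : ∀ n, 0 ≤ (u n).1 ∧ ¬ ∃ k ∈ Γ (u n).1, dist k x < ε := by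
      intro n
      cases n with
      | zero => exact (hf _).2.2
      | succ n => exact (hf _).2.2
    have hb : ∀ n, t - (u n).1 ≤ t * (1/2)^n := by
      intro n
      induction n with
      | zero => have := (hu0 0).1; simp; exact this
      | succ n ih =>
        have := (hf (u n)).2.1
        have e : u (n+1) = f (u n) := rfl
        rw [e, pow_succ]
        linarith
    have hseq : SeqToLeft t (fun n => (u n).1) := by
      refine ⟨strictMono_nat_of_lt_succ fun n => (hf (u n)).1, fun n => ⟨(hu0 n).1, (u n).2⟩, ?_⟩
      have hlim : Tendsto (fun n : ℕ => t - t * (1/2:ℝ)^n) atTop (𝓝 t) := by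
        have := (tendsto_pow_atTop_nhds_zero_of_lt_one (r := (1/2:ℝ)) (by norm_num)
          (by norm_num)).const_mul t
        simpa using this.const_sub t
      exact tendsto_of_tendsto_of_tendsto_of_le_of_le hlim tendsto_const_nhds
        (fun n => by have := hb n; simp only; linarith) (fun n => (mem_Iio.1 (u n).2).le)
    have hl := hx _ hseq
    obtain ⟨n, hn⟩ := (hl.eventually (gt_mem_nhds hε)).exists
    have hnn : (Γ (u n).1).Nonempty := hne _ ⟨(hu0 n).1, (mem_Iio.1 (u n).2).le.trans ht.2⟩
    obtain ⟨k, hk, hd⟩ := (Metric.infDist_lt_iff hnn).1 hn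
    exact (hu0 n).2 ⟨k, hk, by rwa [dist_comm]⟩
  · intro hx s hs
    have hlim : Tendsto s atTop (𝓝[<] t) :=
      tendsto_nhdsWithin_iff.2 ⟨hs.2.2, Eventually.of_forall fun n => (hs.2.1 n).2⟩
    rw [Metric.tendsto_nhds]
    intro ε hε
    filter_upwards [hlim.eventually (hx ε hε)] with n ⟨k, hk, hd⟩
    rw [Real.dist_0_eq_abs, abs_of_nonneg Metric.infDist_nonneg]
    rw [dist_comm] at hd
    exact (Metric.infDist_le_dist_of_mem hk).trans_lt hd

def Cad {d : ℕ} (z : ℝ → Euc d) : Prop :=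
  ∀ t, Tendsto z (𝓝[>] t) (𝓝 (z t)) ∧ ∃ l, Tendsto z (𝓝[<] t) (𝓝 l)

noncomputable def glue {d : ℕ} (s : ℝ) (z w : ℝ → Euc d) : ℝ → Euc d :=
  fun r => if r < s then z r else w r

lemma glue_lt {d : ℕ} {s r : ℝ} (z w : ℝ → Euc d) (h : r < s) : glue s z w r = z r := if_pos h
lemma glue_ge {d : ℕ} {s r : ℝ} (z w : ℝ → Euc d) (h : s ≤ r) : glue s z w r = w r :=
  if_neg (not_lt.2 h)

lemma Cad_const {d : ℕ} (x : Euc d) : Cad (fun _ => x) :=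
  fun _ => ⟨tendsto_const_nhds, x, tendsto_const_nhds⟩

lemma Cad_glue {d : ℕ} {z w : ℝ → Euc d} (hz : Cad z) (hw : Cad w) (s : ℝ) :
    Cad (glue s z w) := by
  intro t
  constructor
  · rcases lt_or_ge t s with h | h
    · rw [glue_lt z w h]
      refine (hz t).1.congr' ?_
      filter_upwards [Ioo_mem_nhdsGT h] with r hr
      exact (glue_lt z w hr.2).symm
    · rw [glue_ge z w h]
      refine (hw t).1.congr' ?_
      filter_upwards [self_mem_nhdsWithin] with r hr
      exact (glue_ge z w (h.trans (le_of_lt hr))).symm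
  · rcases le_or_gt t s with h | h
    · obtain ⟨l, hl⟩ := (hz t).2
      refine ⟨l, hl.congr' ?_⟩
      filter_upwards [self_mem_nhdsWithin] with r hr
      exact (glue_lt z w (lt_of_lt_of_le hr h)).symm
    · obtain ⟨l, hl⟩ := (hw t).2
      refine ⟨l, hl.congr' ?_⟩
      filter_upwards [Ioo_mem_nhdsLT h] with r hr
      exact (glue_ge z w hr.1.le).symm

lemma Cad.on {d : ℕ} {z : ℝ → Euc d} (hz : Cad z) (T : ℝ) : IsCadlagOn T z :=
  ⟨fun t _ => (hz t).1, fun t _ => (hz t).2⟩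

lemma exists_sel {d : ℕ} (T : ℝ) (hT : 0 < T) (Γ : ℝ → Set (Euc d))
    (hR : ∀ t ∈ Icc (0:ℝ) T, ∃ x, ∃ δ > (0:ℝ), ∀ s ∈ Icc (0:ℝ) T, t ≤ s → s < t + δ → x ∈ Γ s)
    (hL : ∀ t ∈ Ioc (0:ℝ) T, ∃ x, ∃ a < t, ∀ s ∈ Icc (0:ℝ) T, a < s → s < t → x ∈ Γ s) :
    ∃ z : ℝ → Euc d, Cad z ∧ ∀ r ∈ Icc (0:ℝ) T, z r ∈ Γ r := by
  let Q : ℝ → Prop := fun t => ∃ z : ℝ → Euc d, Cad z ∧ ∀ r ∈ Icc (0:ℝ) T, r < t → z r ∈ Γ r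
  have hmono : ∀ s t, s ≤ t → Q t → Q s := fun s t hst ⟨z, hz, h⟩ =>
    ⟨z, hz, fun r hr hrs => h r hr (hrs.trans_le hst)⟩
  have hQ0 : Q 0 := ⟨fun _ => 0, Cad_const 0, fun r hr h => absurd hr.1 (not_le.2 h)⟩
  have hright : ∀ t ∈ Icc (0:ℝ) T, Q t → ∃ δ > (0:ℝ), Q (t + δ) := by
    rintro t ht ⟨z, hz, h⟩
    obtain ⟨x, δ, hδ, hx⟩ := hR t ht
    refine ⟨δ, hδ, glue t z (fun _ => x), Cad_glue hz (Cad_const x) t, fun r hr hrt => ?_⟩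
    rcases lt_or_ge r t with h1 | h1
    · rw [glue_lt _ _ h1]; exact h r hr h1
    · rw [glue_ge _ _ h1]; exact hx r hr h1 hrt
  have hleft : ∀ t ∈ Icc (0:ℝ) T, (∀ s < t, Q s) → Q t := by
    intro t ht hs
    rcases ht.1.eq_or_lt with h0 | h0
    · rw [← h0]; exact hQ0
    obtain ⟨x, a, ha, hx⟩ := hL t ⟨h0, ht.2⟩
    obtain ⟨z, hz, h⟩ := hs ((a+t)/2) (by linarith)
    refine ⟨glue ((a+t)/2) z (fun _ => x), Cad_glue hz (Cad_const x) _, fun r hr hrt => ?_⟩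
    rcases lt_or_ge r ((a+t)/2) with h1 | h1
    · rw [glue_lt _ _ h1]; exact h r hr h1
    · rw [glue_ge _ _ h1]; exact hx r hr (by linarith) hrt
  let S : Set ℝ := {t | t ∈ Icc (0:ℝ) T ∧ Q t}
  have hS0 : (0:ℝ) ∈ S := ⟨⟨le_rfl, hT.le⟩, hQ0⟩
  have hbdd : BddAbove S := ⟨T, fun t ht => ht.1.2⟩
  have hc : sSup S ∈ Icc (0:ℝ) T := ⟨le_csSup hbdd hS0, csSup_le ⟨0, hS0⟩ fun t ht => ht.1.2⟩
  have hQc : Q (sSup S) := hleft _ hc fun s hs => by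
    obtain ⟨t, ht, hst⟩ := exists_lt_of_lt_csSup ⟨0, hS0⟩ hs
    exact hmono s t hst.le ht.2
  obtain ⟨δ, hδ, hQ⟩ := hright _ hc hQc
  rcases lt_or_ge T (sSup S + δ) with h | h
  · obtain ⟨z, hz, hh⟩ := hQ
    exact ⟨z, hz, fun r hr => hh r hr (hr.2.trans_lt h)⟩
  · have : sSup S + δ ∈ S := ⟨⟨by linarith [hc.1], h⟩, hQ⟩
    linarith [le_csSup hbdd this]


/-- **Càdlàg selections of solid convex-valued mappings** (Theorem 7.2): for a closed
convex-valued mapping `Γ` with `int Γ_t ≠ ∅` and `int ⃗Γ_t ≠ ∅`, one has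
`Γ_t = cl{y_t | y ∈ D(Γ)}` for all `t` iff `Γ` is right-inner semicontinuous; in that
case `⃗Γ` is left-inner semicontinuous and `⃗Γ_t = cl{y_{t-} | y ∈ D(Γ)}`. -/
theorem statement10 {d : ℕ} (T : ℝ) (hT : 0 < T) (Γ : ℝ → Set (Euc d))
    (hval : ∀ t ∈ Set.Icc (0:ℝ) T, IsClosed (Γ t) ∧ Convex ℝ (Γ t))
    (hsolid : ∀ t ∈ Set.Icc (0:ℝ) T, (interior (Γ t)).Nonempty)
    (hsolidvec : ∀ t ∈ Set.Ioc (0:ℝ) T, (interior (vecSV Γ t)).Nonempty) :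
    ((∀ t ∈ Set.Icc (0:ℝ) T, Γ t = closure {v | ∃ z : ℝ → Euc d,
        (IsCadlagOn T z ∧ ∀ r ∈ Set.Icc (0:ℝ) T, z r ∈ Γ r) ∧ z t = v}) ↔
      RightIscSV T Γ) ∧
    (RightIscSV T Γ →
      LeftIscSV T (vecSV Γ) ∧
      ∀ t ∈ Set.Ioc (0:ℝ) T, vecSV Γ t = closure {v | ∃ z : ℝ → Euc d,
        (IsCadlagOn T z ∧ ∀ r ∈ Set.Icc (0:ℝ) T, z r ∈ Γ r) ∧ lmod z t = v}) := by
  have hne : ∀ t ∈ Set.Icc (0:ℝ) T, (Γ t).Nonempty := fun t ht =>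
    (hsolid t ht).mono interior_subset
  have hvec : ∀ t ∈ Ioc (0:ℝ) T, vecSV Γ t = LI (𝓝[<] t) Γ := fun t ht => by
    rw [vecSV, if_neg (not_le.2 ht.1), leftLiminf_eq Γ hne ht]
  have hevL : ∀ t ∈ Ioc (0:ℝ) T, ∀ᶠ s in 𝓝[<] t, s ∈ Icc (0:ℝ) T := fun t ht => by
    filter_upwards [Ioo_mem_nhdsLT ht.1] with s hs
    exact ⟨hs.1.le, hs.2.le.trans ht.2⟩
  have hclL : ∀ t ∈ Ioc (0:ℝ) T, IsClosed (vecSV Γ t) := fun t ht => by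
    rw [hvec t ht]; exact LI_closed _ _
  have hdL : ∀ t ∈ Ioc (0:ℝ) T, vecSV Γ t ⊆ closure (interior (vecSV Γ t)) := fun t ht => by
    have hcv : Convex ℝ (vecSV Γ t) := by
      rw [hvec t ht]
      exact LI_convex _ _ ((hevL t ht).mono fun s hs => (hval s hs).2)
    rw [hcv.closure_interior_eq_closure_of_nonempty_interior (hsolidvec t ht)]
    exact subset_closure
  have hintL : ∀ t ∈ Ioc (0:ℝ) T, ∀ x ∈ interior (vecSV Γ t), ∃ a, 0 ≤ a ∧ a < t ∧
      ∀ s, a < s → s < t → x ∈ Γ s := by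
    intro t ht x hx
    rw [hvec t ht] at hx
    have h1 := LI_int _ _ ((hevL t ht).mono fun s hs => hval s hs) hx
    obtain ⟨a, ha, hsub⟩ := (mem_nhdsLT_iff_exists_Ioo_subset' ht.1).1 h1
    exact ⟨max a 0, le_max_right _ _, max_lt ha ht.1, fun s h2 h3 =>
      hsub ⟨(le_max_left _ _).trans_lt h2, h3⟩⟩
  have hdR : ∀ t ∈ Icc (0:ℝ) T, Γ t ⊆ closure (interior (Γ t)) := fun t ht => by
    rw [(hval t ht).2.closure_interior_eq_closure_of_nonempty_interior (hsolid t ht)]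
    exact subset_closure
  have hintR : RightIscSV T Γ → ∀ t ∈ Icc (0:ℝ) T, ∀ x ∈ interior (Γ t), ∃ δ > (0:ℝ),
      ∀ s ∈ Icc (0:ℝ) T, t ≤ s → s < t + δ → x ∈ Γ s := by
    intro hisc t ht x hx
    have hsub : Γ t ⊆ LI (𝓝[Icc t T] t) Γ := by
      intro y hy ε hε
      obtain ⟨δ, hδ, h⟩ := hisc t ht y hy ε hε
      filter_upwards [self_mem_nhdsWithin, mem_nhdsWithin_of_mem_nhds
        (Iio_mem_nhds (show t < t + δ by linarith))] with s hs hs2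
      exact h s ⟨ht.1.trans hs.1, hs.2⟩ hs.1 hs2
    have hev : ∀ᶠ s in 𝓝[Icc t T] t, IsClosed (Γ s) ∧ Convex ℝ (Γ s) := by
      filter_upwards [self_mem_nhdsWithin] with s hs
      exact hval s ⟨ht.1.trans hs.1, hs.2⟩
    have h1 := LI_int _ _ hev (interior_mono hsub hx)
    obtain ⟨δ, hδ, h2⟩ := Metric.mem_nhdsWithin_iff.1 h1
    refine ⟨δ, hδ, fun s hs hts hst => h2 ⟨?_, hts, hs.2⟩⟩
    rw [Metric.mem_ball, Real.dist_eq, abs_of_nonneg (by linarith)]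
    linarith
  have hsel : RightIscSV T Γ → ∃ z : ℝ → Euc d, Cad z ∧ ∀ r ∈ Icc (0:ℝ) T, z r ∈ Γ r := by
    intro hisc
    refine exists_sel T hT Γ (fun t ht => ?_) (fun t ht => ?_)
    · obtain ⟨x, hx⟩ := hsolid t ht
      exact ⟨x, hintR hisc t ht x hx⟩
    · obtain ⟨x, hx⟩ := hsolidvec t ht
      obtain ⟨a, -, ha, h⟩ := hintL t ht x hx
      exact ⟨x, a, ha, fun s _ => h s⟩
  refine ⟨⟨fun h t ht x hx ε hε => ?_, fun hisc t ht => ?_⟩, fun hisc => ⟨?_, fun t ht => ?_⟩⟩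
  · rw [h t ht] at hx
    obtain ⟨v, ⟨z, ⟨hz, hzΓ⟩, rfl⟩, hv⟩ := Metric.mem_closure_iff.1 hx ε hε
    rw [dist_comm] at hv
    rcases ht.2.eq_or_lt with h0 | h0
    · refine ⟨1, one_pos, fun s hs hts _ => ⟨z t, ?_, hv⟩⟩
      rw [show s = t from le_antisymm (h0 ▸ hs.2) hts]
      exact hzΓ t ht
    · have h1 : ∀ᶠ s in 𝓝[>] t, dist (z s) x < ε :=
        ((hz.1 t ⟨ht.1, h0⟩).dist tendsto_const_nhds).eventually (gt_mem_nhds hv)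
      obtain ⟨b, hb, hsub⟩ := (mem_nhdsGT_iff_exists_Ioo_subset' h0).1 h1
      rw [mem_Ioi] at hb
      refine ⟨b - t, by linarith, fun s hs hts hst => ⟨z s, hzΓ s hs, ?_⟩⟩
      rcases hts.eq_or_lt with h2 | h2
      · rw [← h2]; exact hv
      · exact hsub ⟨h2, by linarith⟩
  · apply Subset.antisymm
    · refine (hdR t ht).trans (closure_mono fun x hx => ?_)
      obtain ⟨z, hz, hzΓ⟩ := hsel hisc
      obtain ⟨δ, hδ, h⟩ := hintR hisc t ht x hx
      refine ⟨glue t z (glue (t + δ) (fun _ => x) z),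
        ⟨(Cad_glue hz (Cad_glue (Cad_const x) hz _) _).on T, fun r hr => ?_⟩, ?_⟩
      · rcases lt_or_ge r t with h1 | h1
        · rw [glue_lt _ _ h1]; exact hzΓ r hr
        · rw [glue_ge _ _ h1]
          rcases lt_or_ge r (t + δ) with h2 | h2
          · rw [glue_lt _ _ h2]; exact h r hr h1 h2
          · rw [glue_ge _ _ h2]; exact hzΓ r hr
      · rw [glue_ge _ _ le_rfl, glue_lt _ _ (by linarith)]
    · refine closure_minimal ?_ (hval t ht).1
      rintro v ⟨z, ⟨-, h⟩, rfl⟩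
      exact h t ht
  · intro t ht x hx ε hε
    rcases ht.1.eq_or_lt with h0 | h0
    · refine ⟨1, one_pos, fun s hs hst _ => ⟨x, ?_, by rwa [dist_self]⟩⟩
      rw [show s = t from le_antisymm hst (h0 ▸ hs.1)]
      exact hx
    · have ht' : t ∈ Ioc (0:ℝ) T := ⟨h0, ht.2⟩
      obtain ⟨y, hy, hxy⟩ := Metric.mem_closure_iff.1 (hdL t ht' hx) ε hε
      obtain ⟨a, ha0, hat, h⟩ := hintL t ht' y hy
      refine ⟨t - a, by linarith, fun s hs hst has => ?_⟩
      rcases hst.eq_or_lt with h2 | h2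
      · exact ⟨x, h2 ▸ hx, by rwa [dist_self]⟩
      · refine ⟨y, ?_, by rwa [dist_comm]⟩
        have has' : a < s := by linarith
        rw [hvec s ⟨by linarith, hs.2⟩]
        intro η hη
        filter_upwards [Ioo_mem_nhdsLT has'] with r hr
        exact ⟨y, h r hr.1 (hr.2.trans h2), by rwa [dist_self]⟩
  · have hlm : ∀ (z : ℝ → Euc d) l, Tendsto z (𝓝[<] t) (𝓝 l) → lmod z t = l := by
      intro z l hl
      rw [lmod, if_neg (not_le.2 ht.1)]
      exact leftLim_eq_of_tendsto hl
    apply Subset.antisymm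
    · refine (hdL t ht).trans (closure_mono fun x hx => ?_)
      obtain ⟨z, hz, hzΓ⟩ := hsel hisc
      obtain ⟨a, ha0, hat, h⟩ := hintL t ht x hx
      refine ⟨glue ((a + t)/2) z (glue t (fun _ => x) z),
        ⟨(Cad_glue hz (Cad_glue (Cad_const x) hz _) _).on T, fun r hr => ?_⟩, ?_⟩
      · rcases lt_or_ge r ((a + t)/2) with h1 | h1
        · rw [glue_lt _ _ h1]; exact hzΓ r hr
        · rw [glue_ge _ _ h1]
          rcases lt_or_ge r t with h2 | h2
          · rw [glue_lt _ _ h2]; exact h r (by linarith) h2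
          · rw [glue_ge _ _ h2]; exact hzΓ r hr
      · apply hlm
        refine tendsto_const_nhds.congr' ?_
        filter_upwards [Ioo_mem_nhdsLT (show (a + t)/2 < t by linarith)] with r hr
        rw [glue_ge _ _ hr.1.le, glue_lt _ _ hr.2]
    · refine closure_minimal ?_ (hclL t ht)
      rintro v ⟨z, ⟨hz, h⟩, rfl⟩
      obtain ⟨l, hl⟩ := hz.2 t ht
      rw [hlm z l hl, hvec t ht]
      intro ε hε
      filter_upwards [hevL t ht, Metric.tendsto_nhds.1 hl ε hε] with s hs hd
      exact ⟨z s, h s hs, hd⟩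
end

section
/- Let (Ω,F,P) be a complete probability space, T > 0 finite, and A ∈ F ⊗ B([0,T]). Then the set ⃗cl A := {(ω,t) ∈ Ω × (0,T] | for every s < t, (s,t) ∩ A_ω ≠ ∅}, where A_ω := {t | (ω,t) ∈ A}, belongs to F ⊗ B([0,T]). -/
open MeasureTheory Filter Set Topology
open scoped ENNReal Classical

theorem aux_compact {X : Type*} [TopologicalSpace X] [MeasurableSpace X]
    (μ : Measure X) [μ.OuterRegular] (g : (ℕ → ℕ) → X) (hg : Continuous g) (a : ℝ≥0∞)
    (ha : a < μ (range g)) : ∃ K ⊆ range g, IsCompact K ∧ a ≤ μ K := by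
  have step : ∀ (k : ℕ) (C : {C : Set (ℕ → ℕ) // a < μ (g '' C)}),
      ∃ n : ℕ, a < μ (g '' (C.1 ∩ {x | x k ≤ n})) := by
    rintro k ⟨C, hC⟩
    have h1 : g '' C = ⋃ n : ℕ, g '' (C ∩ {x | x k ≤ n}) := by
      rw [← image_iUnion, ← inter_iUnion]
      congr 1
      ext x
      simp only [mem_inter_iff, mem_iUnion, mem_ofPred_eq]
      exact ⟨fun h => ⟨h, x k, le_rfl⟩, fun h => h.1⟩
    have hm : Monotone fun n : ℕ => g '' (C ∩ {x | x k ≤ n}) := by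
      intro m n hmn
      apply image_mono
      rintro x ⟨hx, hx2⟩
      exact ⟨hx, le_trans hx2 hmn⟩
    rw [h1, hm.measure_iUnion] at hC
    exact lt_iSup_iff.1 hC
  choose N hN using step
  let D : ℕ → {C : Set (ℕ → ℕ) // a < μ (g '' C)} := fun k =>
    Nat.rec ⟨univ, by rwa [image_univ]⟩ (fun k C => ⟨C.1 ∩ {x | x k ≤ N k C}, hN k C⟩) k
  let n : ℕ → ℕ := fun k => N k (D k)
  have hD : ∀ k x, x ∈ (D k).1 → ∀ i < k, x i ≤ n i := by
    intro k
    induction k with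
    | zero => intro x _ i hi; omega
    | succ k ih =>
      intro x hx i hi
      have hx' : x ∈ (D k).1 ∩ {x | x k ≤ N k (D k)} := hx
      rcases Nat.lt_succ_iff_lt_or_eq.1 hi with h | h
      · exact ih x hx'.1 i h
      · subst h; exact hx'.2
  let K : Set (ℕ → ℕ) := Set.pi univ fun i => Set.Iic (n i)
  have hK : IsCompact K := isCompact_univ_pi fun i => (Set.finite_Iic (n i)).isCompact
  refine ⟨g '' K, image_subset_range _ _, hK.image hg, ?_⟩
  by_contra! hlt
  obtain ⟨U, hKU, hU, hUa⟩ := Set.exists_isOpen_lt_of_lt (g '' K) a hlt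
  have hns : ∀ k, ∃ x ∈ (D k).1, g x ∉ U := by
    intro k
    by_contra! h
    have : μ (g '' (D k).1) ≤ μ U := measure_mono (by rintro _ ⟨x, hx, rfl⟩; exact h x hx)
    exact absurd ((D k).2.trans_le this) (not_lt.2 hUa.le)
  choose x hxD hxU using hns
  let y : ℕ → ℕ → ℕ := fun k i => min (x k i) (n i)
  have hy : ∀ k, y k ∈ K := fun k i _ => mem_Iic.2 (min_le_right _ _)
  obtain ⟨z, hz, φ, hφ, hlim⟩ := hK.tendsto_subseq hy
  have hlim2 : Tendsto (x ∘ φ) atTop (𝓝 z) := by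
    rw [tendsto_pi_nhds] at hlim ⊢
    intro i
    refine (hlim i).congr' ?_
    filter_upwards [eventually_gt_atTop i] with k hk
    exact min_eq_left (hD _ _ (hxD (φ k)) i (hk.trans_le (hφ.id_le k)))
  have : ∀ᶠ k in atTop, (x ∘ φ) k ∈ g ⁻¹' U :=
    hlim2 ((hU.preimage hg).mem_nhds (hKU (mem_image_of_mem g hz)))
  obtain ⟨k, hk⟩ := this.exists
  exact hxU _ hk

theorem aux_null {X : Type*} [TopologicalSpace X] [T2Space X] [MeasurableSpace X] [BorelSpace X]
    (μ : Measure X) [IsFiniteMeasure μ] [μ.OuterRegular] (S : Set X) (hS : AnalyticSet S) :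
    NullMeasurableSet S μ := by
  rw [AnalyticSet] at hS
  rcases hS with rfl | ⟨g, hg, rfl⟩
  · exact MeasurableSet.empty.nullMeasurableSet
  by_cases h0 : μ (range g) = 0
  · exact NullMeasurableSet.of_null h0
  obtain ⟨u, _, hu, hul⟩ := exists_seq_strictMono_tendsto' (pos_iff_ne_zero.2 h0)
  choose K hKS hK hKa using fun n => aux_compact μ g hg (u n) (hu n).2
  have hm : MeasurableSet (⋃ n, K n) := MeasurableSet.iUnion fun n => (hK n).measurableSet
  have hle : μ (range g) ≤ μ (⋃ n, K n) :=
    le_of_tendsto' hul fun n => (hKa n).trans (measure_mono (subset_iUnion K n))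
  exact hm.nullMeasurableSet.congr
    (ae_eq_of_subset_of_measure_ge (iUnion_subset hKS) hle hm.nullMeasurableSet
      (measure_ne_top _ _))

theorem aux_red {Ω : Type*} [MeasurableSpace Ω] (A : Set (Ω × ℝ)) (hA : MeasurableSet A) :
    ∃ (f : Ω → ℕ → Bool) (B : Set ((ℕ → Bool) × ℝ)), Measurable f ∧ MeasurableSet B ∧
      A = (fun p : Ω × ℝ => (f p.1, p.2)) ⁻¹' B := by
  rw [← generateFrom_prod] at hA
  induction A, hA using MeasurableSpace.generateFrom_induction with
  | hC t ht _ =>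
    obtain ⟨s, hs, t, ht, rfl⟩ := ht
    refine ⟨fun ω _ => decide (ω ∈ s), {p | p.1 0 = true ∧ p.2 ∈ t}, ?_, ?_, ?_⟩
    · refine measurable_pi_lambda _ fun _ => measurable_to_bool ?_
      have : (fun ω => decide (ω ∈ s)) ⁻¹' {true} = s := by ext; simp
      rw [this]
      exact hs
    · have h1 : Measurable fun p : (ℕ → Bool) × ℝ => p.1 0 :=
        (measurable_pi_apply 0).comp measurable_fst
      exact (h1 (measurableSet_singleton true)).inter (measurable_snd ht)
    · ext p; simp
  | empty => exact ⟨fun _ _ => true, ∅, measurable_const, MeasurableSet.empty, rfl⟩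
  | compl t _ ih =>
    obtain ⟨f, B, hf, hB, rfl⟩ := ih
    exact ⟨f, Bᶜ, hf, hB.compl, rfl⟩
  | iUnion s _ ih =>
    choose f B hf hB h using ih
    refine ⟨fun ω m => f m.unpair.1 ω m.unpair.2,
      ⋃ n, (fun p : (ℕ → Bool) × ℝ => ((fun j => p.1 (Nat.pair n j)), p.2)) ⁻¹' B n, ?_, ?_, ?_⟩
    · exact measurable_pi_lambda _ fun m => (measurable_pi_apply _).comp (hf _)
    · refine MeasurableSet.iUnion fun n => ?_
      refine Measurable.prodMk ?_ measurable_snd (hB n)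
      exact measurable_pi_lambda _ fun j => (measurable_pi_apply _).comp measurable_fst
    · rw [preimage_iUnion]
      refine iUnion_congr fun n => ?_
      rw [h n]
      ext p
      simp

theorem aux_proj {Ω : Type*} [MeasurableSpace Ω] (P : Measure Ω) [IsProbabilityMeasure P]
    (hP : P.IsComplete) (A : Set (Ω × ℝ)) (hA : MeasurableSet A) :
    MeasurableSet {ω | ∃ t, (ω, t) ∈ A} := by
  obtain ⟨f, B, hf, hB, rfl⟩ := aux_red A hA
  have : PolishSpace Bool := inferInstance
  have : PolishSpace (ℕ → Bool) := inferInstance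
  have h1 : AnalyticSet (Prod.fst '' B) := hB.analyticSet.image_of_continuous continuous_fst
  let _ : MetricSpace (ℕ → Bool) := TopologicalSpace.metrizableSpaceMetric _
  have h2 : NullMeasurableSet (Prod.fst '' B) (P.map f) := aux_null _ _ h1
  have h3 := h2.preimage (f := f) (μa := P) ⟨hf, Measure.AbsolutelyContinuous.rfl⟩
  have h4 := h3.measurable_of_complete
  convert h4 using 1
  ext ω
  simp


/-- **Measurability of pathwise left limit points** (Lemma 7.4): for a complete
probability space `(Ω,F,P)` and `A ∈ F ⊗ B([0,T])`, the set
`⃗cl A = {(ω,t) | t ∈ (0,T] and (s,t) ∩ A_ω ≠ ∅ for every s < t}` is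
`F ⊗ B([0,T])`-measurable. -/
theorem statement12 {Ω : Type*} [mΩ : MeasurableSpace Ω] (T : ℝ) (hT : 0 < T)
    (P : Measure Ω) [IsProbabilityMeasure P] (hP : P.IsComplete)
    (A : Set (Ω × ℝ)) (hA : MeasurableSet A) (hAT : A ⊆ Set.univ ×ˢ Set.Icc (0:ℝ) T) :
    MeasurableSet {p : Ω × ℝ | p.2 ∈ Set.Ioc (0:ℝ) T ∧
      ∀ s < p.2, (Set.Ioo s p.2 ∩ {t : ℝ | (p.1, t) ∈ A}).Nonempty} := by
  have key : {p : Ω × ℝ | p.2 ∈ Set.Ioc (0:ℝ) T ∧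
      ∀ s < p.2, (Set.Ioo s p.2 ∩ {t : ℝ | (p.1, t) ∈ A}).Nonempty} =
      Prod.snd ⁻¹' (Set.Ioc (0:ℝ) T) ∩ ⋂ s : ℚ, (Prod.snd ⁻¹' (Set.Iic (s:ℝ)) ∪
        ⋃ r : ℚ, {ω | ∃ t, (ω, t) ∈ A ∩ Prod.snd ⁻¹' (Set.Ioo (s:ℝ) r)} ×ˢ Set.Ici (r:ℝ)) := by
    ext ⟨ω, t⟩
    simp only [mem_ofPred_eq, mem_inter_iff, mem_preimage, mem_iInter, mem_union, mem_iUnion,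
      mem_prod, mem_Iic, mem_Ici, Set.Nonempty, mem_Ioo]
    refine and_congr_right fun _ => ⟨fun h s => ?_, fun h s hs => ?_⟩
    · rcases le_or_gt t s with hs | hs
      · exact Or.inl hs
      · obtain ⟨u, ⟨h1, h2⟩, hu⟩ := h s hs
        obtain ⟨r, hr1, hr2⟩ := exists_rat_btwn h2
        exact Or.inr ⟨r, ⟨u, hu, h1, hr1⟩, hr2.le⟩
    · obtain ⟨q, hq1, hq2⟩ := exists_rat_btwn hs
      rcases h q with h | ⟨r, ⟨u, hu, h1, h2⟩, h3⟩
      · exact absurd hq2 (not_lt.2 h)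
      · exact ⟨u, ⟨hq1.trans h1, h2.trans_le h3⟩, hu⟩
  rw [key]
  refine (measurable_snd measurableSet_Ioc).inter (MeasurableSet.iInter fun s =>
    (measurable_snd measurableSet_Iic).union (MeasurableSet.iUnion fun r => ?_))
  exact (aux_proj P hP _ (hA.inter (measurable_snd measurableSet_Ioo))).prod measurableSet_Ici
end

section
/- Let (Ω,F,(F_t)_{t∈[0,T]},P) be a complete filtered probability space satisfying the usual conditions, T > 0 finite, and Γ : Ω × [0,T] ⇒ ℝ^d a progressively measurable set-valued mapping: for each t ∈ [0,T] and each open O ⊆ ℝ^d, {(ω,s) ∈ Ω × [0,t] | Γ_s(ω) ∩ O ≠ ∅} ∈ F_t ⊗ B([0,t]). Then the mapping ⃗Γ, defined pathwise by ⃗Γ_0(ω) := {0} and ⃗Γ_t(ω) := liminf_{s↑↑t} Γ_s(ω) for t ∈ (0,T], is predictable: {(ω,t) | ⃗Γ_t(ω) ∩ O ≠ ∅} belongs to the predictable σ-algebra for every open O ⊆ ℝ^d. -/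
open MeasureTheory Filter Set Topology
open scoped ENNReal Classical

theorem aux_compact_approx (μ : Measure ℝ) [IsFiniteMeasure μ] (f : (ℕ → ℕ) → ℝ)
    (hf : Continuous f) (c : ℝ≥0∞) (hc : c < μ (range f)) :
    ∃ K : Set ℝ, IsCompact K ∧ K ⊆ range f ∧ c ≤ μ K := by
  have step : ∀ (k : ℕ) (S : Set (ℕ → ℕ)), c < μ (f '' S) →
      ∃ m : ℕ, c < μ (f '' (S ∩ {x | x k ≤ m})) := by
    intro k S hS
    have hmono : Monotone (fun m : ℕ => f '' (S ∩ {x : ℕ → ℕ | x k ≤ m})) := by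
      intro a b hab
      refine image_mono (inter_subset_inter_right _ ?_)
      intro x (hx : x k ≤ a)
      exact le_trans hx hab
    have hU : (⋃ m : ℕ, f '' (S ∩ {x : ℕ → ℕ | x k ≤ m})) = f '' S := by
      rw [← image_iUnion, ← inter_iUnion]
      congr 1
      refine inter_eq_left.2 fun x _ => mem_iUnion.2 ⟨x k, le_refl (x k)⟩
    rw [← hU, hmono.measure_iUnion] at hS
    exact lt_iSup_iff.1 hS
  choose! m hm using step
  let S : ℕ → Set (ℕ → ℕ) := fun k => Nat.rec univ (fun k S => S ∩ {x | x k ≤ m k S}) k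
  have hSs : ∀ k, S (k+1) = S k ∩ {x | x k ≤ m k (S k)} := fun k => rfl
  have hSc : ∀ k, c < μ (f '' S k) := by
    intro k
    induction k with
    | zero => 
      show c < μ (f '' univ)
      rwa [image_univ]
    | succ k ih => rw [hSs]; exact hm k _ ih
  let n : ℕ → ℕ := fun k => m k (S k)
  have hSn : ∀ k x, x ∈ S k → ∀ i < k, x i ≤ n i := by
    intro k
    induction k with
    | zero => intro x _ i hi; omega
    | succ k ih =>
      intro x hx i hi
      rw [hSs] at hx
      rcases Nat.lt_succ_iff_lt_or_eq.1 hi with h | h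
      · exact ih x hx.1 i h
      · subst h; exact hx.2
  have hSanti : Antitone S := antitone_nat_of_succ_le fun k => by
    rw [hSs]; exact inter_subset_left
  let K : Set (ℕ → ℕ) := Set.pi univ fun i => Iic (n i)
  have hK : IsCompact K := isCompact_univ_pi fun i => (Set.finite_Iic (n i)).isCompact
  have hsub : (⋂ k, closure (f '' S k)) ⊆ f '' K := by
    intro y hy
    rw [mem_iInter] at hy
    have h1 : ∀ k : ℕ, ∃ x ∈ S k, dist y (f x) < 1 / ((k:ℝ) + 1) := by
      intro k
      obtain ⟨_, ⟨x, hx, rfl⟩, h⟩ := Metric.mem_closure_iff.1 (hy k) (1 / ((k:ℝ) + 1)) (by positivity)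
      exact ⟨x, hx, h⟩
    choose x hxS hxd using h1
    obtain ⟨z, hzK, φ, hφ, hlim⟩ := hK.tendsto_subseq (x := fun k i => min (x k i) (n i))
      (fun k => by intro i _; exact Nat.min_le_right (x k i) (n i))
    refine ⟨z, hzK, ?_⟩
    have hx : Tendsto (fun k => x (φ k)) atTop (𝓝 z) := by
      rw [tendsto_pi_nhds] at hlim ⊢
      intro i
      refine (hlim i).congr' ?_
      filter_upwards [eventually_gt_atTop i] with k hk
      exact min_eq_left (hSn _ _ (hxS (φ k)) i (lt_of_lt_of_le hk (StrictMono.le_apply (f := φ) hφ)))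
    have h2 : Tendsto (fun k => f (x (φ k))) atTop (𝓝 (f z)) := (hf.tendsto z).comp hx
    have h3 : Tendsto (fun k => f (x k)) atTop (𝓝 y) := by
      rw [tendsto_iff_dist_tendsto_zero]
      refine squeeze_zero (fun _ => dist_nonneg) (fun k => ?_) (tendsto_one_div_add_atTop_nhds_zero_nat (𝕜 := ℝ))
      rw [dist_comm]; exact (hxd k).le
    exact tendsto_nhds_unique h2 (h3.comp hφ.tendsto_atTop)
  refine ⟨f '' K, hK.image hf, image_subset_range _ _, ?_⟩
  calc c ≤ ⨅ k, μ (closure (f '' S k)) :=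
        le_iInf fun k => (hSc k).le.trans (measure_mono subset_closure)
    _ = μ (⋂ k, closure (f '' S k)) := by
        rw [Antitone.measure_iInter]
        · intro a b hab
          exact closure_mono (image_mono (hSanti hab))
        · intro k; exact isClosed_closure.measurableSet.nullMeasurableSet
        · exact ⟨0, measure_ne_top _ _⟩
    _ ≤ _ := measure_mono hsub

theorem aux_analytic_null (μ : Measure ℝ) [IsFiniteMeasure μ] (A : Set ℝ) (hA : AnalyticSet A) :
    NullMeasurableSet A μ := by
  rw [AnalyticSet] at hA
  rcases hA with rfl | ⟨f, hf, rfl⟩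
  · exact MeasurableSet.empty.nullMeasurableSet
  rcases eq_or_ne (μ (range f)) 0 with h0 | h0
  · exact NullMeasurableSet.of_null h0
  obtain ⟨u, -, hu, hlim⟩ := exists_seq_strictMono_tendsto' (pos_iff_ne_zero.2 h0)
  choose K hK hKs hKm using fun n => aux_compact_approx μ f hf (u n) (hu n).2
  have hm : MeasurableSet (⋃ n, K n) := MeasurableSet.iUnion fun n => (hK n).measurableSet
  have hle : μ (range f) ≤ μ (⋃ n, K n) :=
    le_of_tendsto' hlim fun n => (hKm n).trans (measure_mono (subset_iUnion K n))
  exact hm.nullMeasurableSet.congr (ae_eq_of_subset_of_measure_ge (iUnion_subset hKs) hle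
    hm.nullMeasurableSet (measure_ne_top _ _))

theorem aux_factor {Ω : Type*} (G : MeasurableSpace Ω) (A : Set (Ω × ℝ))
    (hA : MeasurableSet[G.prod (inferInstance : MeasurableSpace ℝ)] A) :
    ∃ (φ : Ω → ℝ) (A' : Set (ℝ × ℝ)), Measurable[G] φ ∧ MeasurableSet A' ∧
      A = {p | (φ p.1, p.2) ∈ A'} := by
  have hgen : (G.prod (inferInstance : MeasurableSpace ℝ)) =
      MeasurableSpace.generateFrom (image2 (· ×ˢ ·) {s : Set Ω | MeasurableSet[G] s}
        {t : Set ℝ | MeasurableSet t}) := (@generateFrom_prod Ω ℝ G _).symm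
  rw [hgen] at hA
  induction A, hA using MeasurableSpace.generateFrom_induction with
  | hC t ht _ =>
    obtain ⟨s, hs, t, ht, rfl⟩ := ht
    refine ⟨s.indicator 1, ({1} : Set ℝ) ×ˢ t, ?_, (measurableSet_singleton _).prod ht, ?_⟩
    · exact (@measurable_const _ _ _ G (1:ℝ)).indicator hs
    · ext p
      by_cases h : p.1 ∈ s <;> simp [h]
  | empty => exact ⟨fun _ => 0, ∅, @measurable_const _ _ _ G _, MeasurableSet.empty, by simp⟩
  | compl t _ ih =>
    obtain ⟨φ, A', h1, h2, rfl⟩ := ih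
    exact ⟨φ, A'ᶜ, h1, h2.compl, rfl⟩
  | iUnion s _ ih =>
    choose φ A' h1 h2 h3 using ih
    have hun : ¬ Countable (ℕ → ℝ) := by
      intro h
      have hi : Function.Injective (fun (x : ℝ) (_ : ℕ) => x) := fun a b hab => congrFun hab 0
      have := hi.countable
      exact not_countable (α := ℝ) this
    let e : (ℕ → ℝ) ≃ᵐ ℝ := PolishSpace.measurableEquivOfNotCountable hun
      (not_countable_iff.2 inferInstance)
    refine ⟨fun ω => e (fun n => φ n ω), ⋃ n, (fun p : ℝ × ℝ => (e.symm p.1 n, p.2)) ⁻¹' A' n,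
      ?_, ?_, ?_⟩
    · exact e.measurable.comp (@measurable_pi_lambda Ω ℕ (fun _ => ℝ) G _ _ h1)
    · refine MeasurableSet.iUnion fun n => ?_
      refine measurableSet_preimage ?_ (h2 n)
      have := e.symm.measurable
      fun_prop
    · ext p
      simp only [mem_iUnion, mem_preimage, mem_ofPred_eq, MeasurableEquiv.symm_apply_apply]
      refine exists_congr fun n => ?_
      rw [h3 n]; rfl

theorem aux_projection {Ω : Type*} (G : MeasurableSpace Ω) [mΩ : MeasurableSpace Ω]
    (P : Measure Ω) [IsProbabilityMeasure P] (hG : G ≤ mΩ)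
    (hnull : ∀ N : Set Ω, P N = 0 → MeasurableSet[G] N) (A : Set (Ω × ℝ))
    (hA : MeasurableSet[G.prod (inferInstance : MeasurableSpace ℝ)] A) :
    MeasurableSet[G] {ω | ∃ s, (ω, s) ∈ A} := by
  obtain ⟨φ, A', hφ, hA', rfl⟩ := aux_factor G A hA
  have hφ' : Measurable φ := hφ.mono hG le_rfl
  have han : AnalyticSet (Prod.fst '' A') := hA'.analyticSet.image_of_continuous continuous_fst
  have hn := aux_analytic_null (P.map φ) _ han
  obtain ⟨t, htm, hst⟩ := hn
  have hae := (hφ'.quasiMeasurePreserving P).preimage_ae_eq hst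
  have hE : {ω | ∃ s, (ω, s) ∈ {p : Ω × ℝ | (φ p.1, p.2) ∈ A'}} = φ ⁻¹' (Prod.fst '' A') := by
    ext ω; simp
  rw [hE]
  have hB : MeasurableSet[G] (φ ⁻¹' t) := hφ htm
  have h1 := hnull _ (ae_eq_set.1 hae).1
  have h2 := hnull _ (ae_eq_set.1 hae).2
  have : φ ⁻¹' (Prod.fst '' A') = (φ ⁻¹' t \ (φ ⁻¹' t \ φ ⁻¹' (Prod.fst '' A'))) ∪
      (φ ⁻¹' (Prod.fst '' A') \ φ ⁻¹' t) := by
    ext ω; simp only [mem_union, Set.mem_sdiff]; tauto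
  rw [this]
  exact @MeasurableSet.union _ G _ _ (@MeasurableSet.diff _ G _ _ hB h2) h1

/-- Eventually from the left, the distance to `x` is below `ε`. -/
def AuxGood {d : ℕ} (Γ : ℝ → Set (Euc d)) (x : Euc d) (ε t : ℝ) : Prop :=
  ∃ q : ℚ, 0 ≤ (q:ℝ) ∧ (q:ℝ) < t ∧ ∀ s : ℝ, (q:ℝ) < s → s < t → Metric.infDist x (Γ s) < ε

theorem aux_mem_liminf {d : ℕ} (Γ : ℝ → Set (Euc d)) (x : Euc d) (t : ℝ) (ht : 0 < t) :
    x ∈ leftLiminfSV Γ t ↔ ∀ ε > 0, AuxGood Γ x ε t := by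
  constructor
  · intro hx ε hε
    by_contra hbad
    have hb : ∀ u : ℝ, ∃ s, u < t → (u < s ∧ 0 ≤ s ∧ s < t ∧ ε ≤ Metric.infDist x (Γ s)) := by
      intro u
      by_cases hu : u < t
      · obtain ⟨q, hq1, hq2⟩ := exists_rat_btwn (max_lt hu ht)
        have hq0 : (0:ℝ) ≤ q := (le_max_right u 0).trans hq1.le
        by_contra hcon
        refine hbad ⟨q, hq0, hq2, fun s hs1 hs2 => ?_⟩
        by_contra hs3
        exact hcon ⟨s, fun _ => ⟨(le_max_left u 0).trans_lt (hq1.trans hs1),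
          hq0.trans hs1.le, hs2, not_lt.1 hs3⟩⟩
      · exact ⟨0, fun h => absurd h hu⟩
    choose c hc using hb
    let s : ℕ → ℝ := fun n => Nat.rec (c 0) (fun n a => c (max a (t - 1 / ((n:ℝ) + 1)))) n
    have hs : ∀ n, s (n+1) = c (max (s n) (t - 1 / ((n:ℝ) + 1))) := fun n => rfl
    have hlt : ∀ n, 0 ≤ s n ∧ s n < t ∧ ε ≤ Metric.infDist x (Γ (s n)) := by
      intro n
      induction n with
      | zero => exact (hc 0 ht).2
      | succ n ih =>
        rw [hs]
        refine (hc _ (max_lt ih.2.1 ?_)).2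
        have : 0 < 1 / ((n:ℝ) + 1) := by positivity
        linarith
    have hgt : ∀ n, max (s n) (t - 1 / ((n:ℝ) + 1)) < s (n+1) := by
      intro n
      rw [hs]
      refine (hc _ (max_lt (hlt n).2.1 ?_)).1
      have : 0 < 1 / ((n:ℝ) + 1) := by positivity
      linarith
    have hseq : SeqToLeft t s := by
      refine ⟨strictMono_nat_of_lt_succ fun n => (le_max_left _ _).trans_lt (hgt n),
        fun n => ⟨(hlt n).1, (hlt n).2.1⟩, ?_⟩
      rw [← tendsto_add_atTop_iff_nat 1]
      have h1 : Tendsto (fun n : ℕ => t - 1 / ((n:ℝ) + 1)) atTop (𝓝 t) := by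
        simpa using tendsto_const_nhds.sub (tendsto_one_div_add_atTop_nhds_zero_nat (𝕜 := ℝ))
      exact tendsto_of_tendsto_of_tendsto_of_le_of_le h1 tendsto_const_nhds
        (fun n => ((le_max_right _ _).trans_lt (hgt n)).le) (fun n => (hlt (n+1)).2.1.le)
    have := ge_of_tendsto' (hx s hseq) fun n => (hlt n).2.2
    linarith
  · intro h s ⟨_, hs, hlim⟩
    rw [Metric.tendsto_atTop']
    intro ε hε
    obtain ⟨q, _, hq, hg⟩ := h ε hε
    obtain ⟨N, hN⟩ := eventually_atTop.1 (hlim.eventually_const_lt hq)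
    refine ⟨N, fun n hn => ?_⟩
    rw [Real.dist_0_eq_abs, abs_of_nonneg Metric.infDist_nonneg]
    exact hg _ (hN n hn.le) (hs n).2

theorem aux_good_near {d : ℕ} (Γ : ℝ → Set (Euc d)) (x y : Euc d) (ε δ t : ℝ)
    (h : AuxGood Γ x ε t) (hd : dist y x ≤ δ) : AuxGood Γ y (ε + δ) t := by
  obtain ⟨q, h0, hq, hg⟩ := h
  refine ⟨q, h0, hq, fun s h1 h2 => ?_⟩
  have := hg s h1 h2
  have h3 := Metric.infDist_le_infDist_add_dist (s := Γ s) (x := y) (y := x)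
  linarith

theorem aux_good_mono {d : ℕ} (Γ : ℝ → Set (Euc d)) (x : Euc d) (ε δ t : ℝ)
    (h : AuxGood Γ x ε t) (hd : ε ≤ δ) : AuxGood Γ x δ t := by
  obtain ⟨q, h0, hq, hg⟩ := h
  exact ⟨q, h0, hq, fun s h1 h2 => (hg s h1 h2).trans_le hd⟩

theorem aux_hit {d : ℕ} (Γ : ℝ → Set (Euc d)) (O : Set (Euc d)) (hO : IsOpen O)
    (D : ℕ → Euc d) (hD : DenseRange D) (t : ℝ) (ht : 0 < t) :
    (leftLiminfSV Γ t ∩ O).Nonempty ↔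
      ∃ i k : ℕ, Metric.closedBall (D i) (1 / ((k:ℝ) + 1)) ⊆ O ∧
        ∀ n : ℕ, ∃ j : ℕ, dist (D j) (D i) < 1 / ((k:ℝ) + 1) + 1 / ((n:ℝ) + 1) ∧
          AuxGood Γ (D j) (1 / ((n:ℝ) + 1)) t := by
  constructor
  · rintro ⟨x, hx, hxO⟩
    rw [aux_mem_liminf Γ x t ht] at hx
    obtain ⟨r, hr, hrO⟩ := Metric.isOpen_iff.1 hO x hxO
    obtain ⟨k, hk⟩ := exists_nat_one_div_lt (half_pos hr)
    have hkp : 0 < 1 / ((k:ℝ) + 1) := by positivity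
    obtain ⟨i, hi⟩ := Metric.denseRange_iff.1 hD x _ hkp
    refine ⟨i, k, ?_, ?_⟩
    · intro y hy
      refine hrO ?_
      rw [Metric.mem_closedBall] at hy
      rw [Metric.mem_ball]
      have h1 := dist_triangle y (D i) x
      rw [dist_comm (D i) x] at h1
      linarith
    · intro n
      have hnp : 0 < 1 / ((n:ℝ) + 1) := by positivity
      obtain ⟨j, hj⟩ := Metric.denseRange_iff.1 hD x _ (half_pos hnp)
      refine ⟨j, ?_, ?_⟩
      · have h1 := dist_triangle (D j) x (D i)
        rw [dist_comm (D j) x] at h1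
        linarith
      · have := aux_good_near Γ x (D j) _ (1 / ((n:ℝ) + 1) / 2) t (hx _ (half_pos hnp)) (by rw [dist_comm]; exact hj.le)
        exact aux_good_mono Γ _ _ _ t this (by linarith)
  · rintro ⟨i, k, hsub, h⟩
    choose j hj hg using h
    have hcb : ∀ n, D (j n) ∈ Metric.closedBall (D i) (1 / ((k:ℝ) + 1) + 1) := by
      intro n
      rw [Metric.mem_closedBall]
      have : 1 / ((n:ℝ) + 1) ≤ 1 := by
        rw [div_le_one (by positivity)]
        have : (0:ℝ) ≤ n := Nat.cast_nonneg n
        linarith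
      linarith [hj n]
    obtain ⟨x, -, φ, hφ, hlim⟩ := (isCompact_closedBall (D i) _).tendsto_subseq hcb
    have h0 : Tendsto (fun n : ℕ => 1 / (((φ n : ℕ):ℝ) + 1)) atTop (𝓝 0) :=
      (tendsto_one_div_add_atTop_nhds_zero_nat (𝕜 := ℝ)).comp hφ.tendsto_atTop
    refine ⟨x, ?_, hsub ?_⟩
    · rw [aux_mem_liminf Γ x t ht]
      intro ε hε
      have e1 := h0.eventually_lt_const (half_pos hε)
      have e2 := (Metric.tendsto_nhds.1 hlim) _ (half_pos hε)
      obtain ⟨n, hn1, hn2⟩ := (e1.and e2).exists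
      have := aux_good_near Γ _ x _ (ε / 2) t (hg (φ n)) (by rw [dist_comm]; exact hn2.le)
      exact aux_good_mono Γ _ _ _ t this (by linarith)
    · rw [Metric.mem_closedBall]
      have h1 : Tendsto (fun n => dist (D (j (φ n))) (D i)) atTop (𝓝 (dist x (D i))) :=
        hlim.dist tendsto_const_nhds
      have h2 : Tendsto (fun n => 1 / ((k:ℝ) + 1) + 1 / (((φ n : ℕ):ℝ) + 1)) atTop
          (𝓝 (1 / ((k:ℝ) + 1))) := by
        simpa using tendsto_const_nhds.add h0
      exact le_of_tendsto_of_tendsto' h1 h2 fun n => (hj (φ n)).le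

theorem aux_bad_meas {Ω : Type*} (G : MeasurableSpace Ω) {d : ℕ} (Γ : Ω → ℝ → Set (Euc d)) (r : ℝ)
    (h : ∀ O : Set (Euc d), IsOpen O →
      MeasurableSet[G.prod (inferInstance : MeasurableSpace ℝ)]
        {p : Ω × ℝ | p.2 ∈ Set.Icc (0:ℝ) r ∧ (Γ p.1 p.2 ∩ O).Nonempty})
    (x : Euc d) (ε : ℝ) (hε : 0 < ε) (q : ℝ) (hq : 0 ≤ q) :
    MeasurableSet[G.prod (inferInstance : MeasurableSpace ℝ)]
      {p : Ω × ℝ | q < p.2 ∧ p.2 < r ∧ ε ≤ Metric.infDist x (Γ p.1 p.2)} := by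
  have h1 := h univ isOpen_univ
  have h2 := h (Metric.ball x ε) Metric.isOpen_ball
  have h3 : MeasurableSet[G.prod (inferInstance : MeasurableSpace ℝ)]
      {p : Ω × ℝ | p.2 ∈ Ioo q r} := by
    have : Measurable (Prod.snd : Ω × ℝ → ℝ) := measurable_snd
    exact this measurableSet_Ioo
  have hE : {p : Ω × ℝ | q < p.2 ∧ p.2 < r ∧ ε ≤ Metric.infDist x (Γ p.1 p.2)} =
      {p : Ω × ℝ | p.2 ∈ Ioo q r} ∩
      ({p : Ω × ℝ | p.2 ∈ Set.Icc (0:ℝ) r ∧ (Γ p.1 p.2 ∩ univ).Nonempty} \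
        {p : Ω × ℝ | p.2 ∈ Set.Icc (0:ℝ) r ∧ (Γ p.1 p.2 ∩ Metric.ball x ε).Nonempty}) := by
    ext p
    constructor
    · rintro ⟨a, b, c⟩
      have hne : (Γ p.1 p.2).Nonempty := by
        by_contra hcon
        rw [not_nonempty_iff_eq_empty] at hcon
        rw [hcon, Metric.infDist_empty] at c
        linarith
      refine ⟨⟨a, b⟩, ⟨⟨(hq.trans a.le), b.le⟩, by rwa [inter_univ]⟩, ?_⟩
      rintro ⟨-, y, hy, hyb⟩
      have := Metric.infDist_le_dist_of_mem (x := x) hy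
      rw [Metric.mem_ball, dist_comm] at hyb
      linarith
    · rintro ⟨⟨a, b⟩, ⟨hI, hne⟩, hn⟩
      rw [inter_univ] at hne
      refine ⟨a, b, ?_⟩
      rw [Metric.le_infDist hne]
      intro y hy
      by_contra hlt
      refine hn ⟨hI, y, hy, ?_⟩
      rw [Metric.mem_ball, dist_comm]
      exact not_le.1 hlt
  rw [hE]
  exact h3.inter (h1.diff h2)

/-- **Predictability of the left-limit mapping** (Lemma 7.5, second part): if
`Γ : Ω × [0,T] ⇒ ℝ^d` is progressively measurable with respect to a filtration
satisfying the usual conditions, then `⃗Γ` is predictable, i.e. `{(ω,t) | ⃗Γ_t(ω) ∩ O ≠ ∅}`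
belongs to the predictable σ-algebra (generated by the sets `A × {0}`, `A ∈ F_0`, and
`A × (u,v]`, `A ∈ F_u`) for every open `O`. -/
theorem statement14 {Ω : Type*} [mΩ : MeasurableSpace Ω] {d : ℕ} (T : ℝ) (hT : 0 < T)
    (P : Measure Ω) [IsProbabilityMeasure P] (hP : P.IsComplete)
    (F : ℝ → MeasurableSpace Ω) (hFmono : Monotone F) (hFle : ∀ t, F t ≤ mΩ)
    -- usual conditions: right-continuity and completeness of the filtration
    (hFright : ∀ t : ℝ, F t = ⨅ (s : ℝ) (_ : t < s), F s)
    (hFnull : ∀ N : Set Ω, P N = 0 → MeasurableSet[F 0] N)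
    (Γ : Ω → ℝ → Set (Euc d))
    -- progressive measurability of `Γ`
    (hprog : ∀ t ∈ Set.Icc (0:ℝ) T, ∀ O : Set (Euc d), IsOpen O →
      MeasurableSet[(F t).prod (inferInstance : MeasurableSpace ℝ)]
        {p : Ω × ℝ | p.2 ∈ Set.Icc (0:ℝ) t ∧ (Γ p.1 p.2 ∩ O).Nonempty}) :
    ∀ O : Set (Euc d), IsOpen O →
      MeasurableSet[MeasurableSpace.generateFrom
        {s : Set (Ω × ℝ) |
          (∃ B : Set Ω, MeasurableSet[F 0] B ∧ s = B ×ˢ ({0} : Set ℝ)) ∨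
          (∃ u v : ℝ, ∃ B : Set Ω, 0 ≤ u ∧ u < v ∧ v ≤ T ∧ MeasurableSet[F u] B ∧
            s = B ×ˢ Set.Ioc u v)}]
        {p : Ω × ℝ | p.2 ∈ Set.Icc (0:ℝ) T ∧ (vecSV (Γ p.1) p.2 ∩ O).Nonempty} := by
  intro O hO
  set mP : MeasurableSpace (Ω × ℝ) := MeasurableSpace.generateFrom
        {s : Set (Ω × ℝ) |
          (∃ B : Set Ω, MeasurableSet[F 0] B ∧ s = B ×ˢ ({0} : Set ℝ)) ∨
          (∃ u v : ℝ, ∃ B : Set Ω, 0 ≤ u ∧ u < v ∧ v ≤ T ∧ MeasurableSet[F u] B ∧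
            s = B ×ˢ Set.Ioc u v)} with hmP
  have hgen0 : MeasurableSet[mP] ((univ : Set Ω) ×ˢ ({0} : Set ℝ)) :=
    MeasurableSpace.measurableSet_generateFrom
      (Or.inl ⟨univ, @MeasurableSet.univ _ (F 0), rfl⟩)
  have hgen : ∀ (u : ℝ) (B : Set Ω), 0 ≤ u → u < T → MeasurableSet[F u] B →
      MeasurableSet[mP] (B ×ˢ Ioc u T) := fun u B h0 h1 hB =>
    MeasurableSpace.measurableSet_generateFrom
      (Or.inr ⟨u, T, B, h0, h1, le_rfl, hB, rfl⟩)
  have hgood : ∀ (x : Euc d) (ε : ℝ), 0 < ε →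
      MeasurableSet[mP] {p : Ω × ℝ | p.2 ∈ Ioc 0 T ∧ AuxGood (Γ p.1) x ε p.2} := by
    intro x ε hε
    have hproj : ∀ q r : ℚ, 0 ≤ (q:ℝ) → (q:ℝ) < r → (r:ℝ) < T → MeasurableSet[F r]
        {ω | ∃ s, (ω, s) ∈ {p : Ω × ℝ | (q:ℝ) < p.2 ∧ p.2 < r ∧
          ε ≤ Metric.infDist x (Γ p.1 p.2)}} := by
      intro q r h0 h1 h2
      have hr0 : (0:ℝ) ≤ r := h0.trans h1.le
      exact aux_projection (F r) P (hFle r) (fun N hN => hFmono hr0 _ (hFnull N hN)) _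
        (aux_bad_meas (F r) Γ r (hprog r ⟨hr0, h2.le⟩) x ε hε q h0)
    have hE : {p : Ω × ℝ | p.2 ∈ Ioc 0 T ∧ AuxGood (Γ p.1) x ε p.2} =
        ⋃ (q : ℚ) (_ : 0 ≤ (q:ℝ) ∧ (q:ℝ) < T), ((univ : Set Ω) ×ˢ Ioc (q:ℝ) T \
          ⋃ (r : ℚ) (_ : (q:ℝ) < r ∧ (r:ℝ) < T),
            {ω | ∃ s, (ω, s) ∈ {p : Ω × ℝ | (q:ℝ) < p.2 ∧ p.2 < r ∧
              ε ≤ Metric.infDist x (Γ p.1 p.2)}} ×ˢ Ioc (r:ℝ) T) := by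
      ext ⟨ω, t⟩
      simp only [mem_iUnion, exists_prop]
      constructor
      · rintro ⟨⟨ht0, htT⟩, q, h0, hq, hg⟩
        refine ⟨q, ⟨h0, hq.trans_le htT⟩, ⟨mem_univ _, hq, htT⟩, ?_⟩
        simp only [mem_iUnion, exists_prop]
        rintro ⟨r, ⟨h1, h2⟩, ⟨s, hs1, hs2, hs3⟩, hr, -⟩
        exact absurd (hg s hs1 (lt_trans hs2 hr)) (not_lt.2 hs3)
      · rintro ⟨q, ⟨h0, hqT⟩, ⟨-, hq, htT⟩, hn⟩
        refine ⟨⟨h0.trans_lt hq, htT⟩, q, h0, hq, fun s hs1 hs2 => ?_⟩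
        by_contra hbad
        obtain ⟨r, hr1, hr2⟩ := exists_rat_btwn hs2
        refine hn ?_
        simp only [mem_iUnion, exists_prop]
        exact ⟨r, ⟨hs1.trans hr1, hr2.trans_le htT⟩, ⟨s, hs1, hr1, not_lt.1 hbad⟩, hr2, htT⟩
    rw [hE]
    refine @MeasurableSet.iUnion _ _ mP _ _ fun q => @MeasurableSet.iUnion _ _ mP _ _ fun hq => ?_
    refine @MeasurableSet.diff _ mP _ _ (hgen q univ hq.1 hq.2 (@MeasurableSet.univ _ (F q))) ?_
    refine @MeasurableSet.iUnion _ _ mP _ _ fun r => @MeasurableSet.iUnion _ _ mP _ _ fun hr => ?_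
    exact hgen r _ (hq.1.trans hr.1.le) hr.2 (hproj q r hq.1 hr.1 hr.2)
  let D : ℕ → Euc d := TopologicalSpace.denseSeq (Euc d)
  have hD : DenseRange D := TopologicalSpace.denseRange_denseSeq _
  have hfin : {p : Ω × ℝ | p.2 ∈ Set.Icc (0:ℝ) T ∧ (vecSV (Γ p.1) p.2 ∩ O).Nonempty} =
      {p : Ω × ℝ | p ∈ (univ : Set Ω) ×ˢ ({0} : Set ℝ) ∧ (0 : Euc d) ∈ O} ∪
      ⋃ (i : ℕ) (k : ℕ) (_ : Metric.closedBall (D i) (1 / ((k:ℝ) + 1)) ⊆ O), ⋂ n : ℕ,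
        ⋃ (j : ℕ) (_ : dist (D j) (D i) < 1 / ((k:ℝ) + 1) + 1 / ((n:ℝ) + 1)),
          {p : Ω × ℝ | p.2 ∈ Ioc 0 T ∧ AuxGood (Γ p.1) (D j) (1 / ((n:ℝ) + 1)) p.2} := by
    ext ⟨ω, t⟩
    simp only [mem_union, mem_iUnion, mem_iInter, exists_prop]
    constructor
    · rintro ⟨⟨h0, hT'⟩, hne⟩
      rcases h0.eq_or_lt with h | h
      · left
        change 0 = t at h
        subst h
        refine ⟨⟨mem_univ _, rfl⟩, ?_⟩
        obtain ⟨y, hy, hyO⟩ := hne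
        rw [vecSV, if_pos le_rfl] at hy
        rw [mem_singleton_iff] at hy
        rwa [hy] at hyO
      · right
        rw [vecSV, if_neg (not_le.2 h), aux_hit _ O hO D hD _ h] at hne
        obtain ⟨i, k, hs, hn⟩ := hne
        refine ⟨i, k, hs, fun n => ?_⟩
        obtain ⟨j, hj, hg⟩ := hn n
        exact ⟨j, hj, ⟨h, hT'⟩, hg⟩
    · rintro (⟨⟨-, h⟩, h0⟩ | ⟨i, k, hs, hn⟩)
      · have h : t = 0 := h
        subst h
        refine ⟨⟨le_rfl, hT.le⟩, 0, ?_, h0⟩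
        rw [vecSV, if_pos le_rfl]; rfl
      · obtain ⟨_, _, ⟨h, hT'⟩, _⟩ := hn 0
        refine ⟨⟨le_of_lt h, hT'⟩, ?_⟩
        rw [vecSV, if_neg (not_le.2 h), aux_hit _ O hO D hD _ h]
        refine ⟨i, k, hs, fun n => ?_⟩
        obtain ⟨j, hj, _, hg⟩ := hn n
        exact ⟨j, hj, hg⟩
  rw [hfin]
  refine @MeasurableSet.union _ mP _ _ ?_ ?_
  · by_cases h : (0 : Euc d) ∈ O
    · simp only [h, and_true]
      exact hgen0
    · simp only [h, and_false]
      exact @MeasurableSet.empty _ mP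
  · refine @MeasurableSet.iUnion _ _ mP _ _ fun i => @MeasurableSet.iUnion _ _ mP _ _ fun k =>
      @MeasurableSet.iUnion _ _ mP _ _ fun _ => @MeasurableSet.iInter _ _ mP _ _ fun n =>
      @MeasurableSet.iUnion _ _ mP _ _ fun j => @MeasurableSet.iUnion _ _ mP _ _ fun _ => ?_
    exact hgood _ _ (by positivity)
end

section
/- Let (Ω,F,(F_t)_{t≥0},P) be a filtered probability space, m ∈ ℕ, and τ : Ω → [0,∞] a random time with {τ < ∞} ⊆ {m < τ ≤ m+1} admitting an announcing sequence: a nondecreasing sequence of stopping times (τ^n) with values in (m,∞], τ^n ≤ τ, τ^n → τ pointwise, τ^n < τ on {τ < ∞}, and {τ = ∞} = ⋃_n {τ^n > m+1}. Then for every decreasing sequence of positive reals ε_n ↓ 0 there exists a nondecreasing sequence of stopping times (σ^n) converging pointwise to τ such that m < σ^n ≤ m+1 on {σ^n < ∞}, σ^n < τ on {τ < ∞}, and |P(σ^n = ∞) − P(τ = ∞)| ≤ ε_n for every n. -/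
open MeasureTheory Filter Set Topology
open scoped ENNReal Classical

/-- **Modified announcing sequences** (Lemma 8.2): for a predictable time `τ` with graph
in `(m,m+1]` and an announcing sequence `(τⁿ)`, and for every decreasing sequence of
positive reals `εₙ ↓ 0`, there is a nondecreasing sequence of stopping times `(σⁿ)`
converging pointwise to `τ`, with `m < σⁿ ≤ m+1` where finite, `σⁿ < τ` on `{τ < ∞}`,
and `|P(σⁿ = ∞) − P(τ = ∞)| ≤ εₙ`. -/
theorem statement15 {Ω : Type*} [mΩ : MeasurableSpace Ω]
    (P : Measure Ω) [IsProbabilityMeasure P]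
    (F : ℝ≥0∞ → MeasurableSpace Ω) (hFmono : Monotone F) (hFle : ∀ t, F t ≤ mΩ)
    (m : ℕ) (τ : Ω → ℝ≥0∞)
    (hτ : ∀ t, MeasurableSet[F t] {ω | τ ω ≤ t})
    (hτm : ∀ ω, τ ω < ⊤ → ((m : ℝ≥0∞) < τ ω ∧ τ ω ≤ (m : ℝ≥0∞) + 1))
    (τn : ℕ → Ω → ℝ≥0∞)
    (hτn_st : ∀ n t, MeasurableSet[F t] {ω | τn n ω ≤ t})
    (hτn_mono : ∀ ω, Monotone fun n => τn n ω)
    (hτn_gt : ∀ n ω, (m : ℝ≥0∞) < τn n ω)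
    (hτn_le : ∀ n ω, τn n ω ≤ τ ω)
    (hτn_tendsto : ∀ ω, Tendsto (fun n => τn n ω) atTop (𝓝 (τ ω)))
    (hτn_lt : ∀ n ω, τ ω < ⊤ → τn n ω < τ ω)
    (hτn_inf : {ω | τ ω = ⊤} = ⋃ n, {ω | (m : ℝ≥0∞) + 1 < τn n ω})
    (ε : ℕ → ℝ) (hεpos : ∀ n, 0 < ε n) (hεanti : Antitone ε)
    (hε0 : Tendsto ε atTop (𝓝 0)) :
    ∃ σ : ℕ → Ω → ℝ≥0∞,
      (∀ n t, MeasurableSet[F t] {ω | σ n ω ≤ t}) ∧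
      (∀ ω, Monotone fun n => σ n ω) ∧
      (∀ ω, Tendsto (fun n => σ n ω) atTop (𝓝 (τ ω))) ∧
      (∀ n ω, σ n ω < ⊤ → (m : ℝ≥0∞) < σ n ω ∧ σ n ω ≤ (m : ℝ≥0∞) + 1) ∧
      (∀ n ω, τ ω < ⊤ → σ n ω < τ ω) ∧
      (∀ n, |(P {ω | σ n ω = ⊤}).toReal - (P {ω | τ ω = ⊤}).toReal| ≤ ε n) := by
  have hm1 : (m : ℝ≥0∞) + 1 < ⊤ := by
    simp
  have hconv : Tendsto (fun n => (P {ω | (m : ℝ≥0∞) + 1 < τn n ω}).toReal) atTop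
      (𝓝 (P {ω | τ ω = ⊤}).toReal) := by
    rw [hτn_inf]
    refine (ENNReal.tendsto_toReal (measure_ne_top _ _)).comp ?_
    refine tendsto_measure_iUnion_atTop ?_
    intro a b hab ω hω
    exact lt_of_lt_of_le hω (hτn_mono ω hab)
  obtain ⟨k, hk, hkε⟩ : ∃ k : ℕ → ℕ, StrictMono k ∧ ∀ n,
      |(P {ω | (m : ℝ≥0∞) + 1 < τn (k n) ω}).toReal - (P {ω | τ ω = ⊤}).toReal| ≤ ε n := by
    refine extraction_forall_of_eventually (P := fun n j =>
      |(P {ω | (m : ℝ≥0∞) + 1 < τn j ω}).toReal - (P {ω | τ ω = ⊤}).toReal| ≤ ε n) ?_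
    intro n
    filter_upwards [Metric.tendsto_nhds.1 hconv (ε n) (hεpos n)] with j hj
    rw [Real.dist_eq] at hj
    exact hj.le
  have hfin : ∀ n ω, τ ω < ⊤ → τn n ω ≤ (m : ℝ≥0∞) + 1 := fun n ω h =>
    (hτn_le n ω).trans (hτm ω h).2
  refine ⟨fun n ω => if τn (k n) ω ≤ (m : ℝ≥0∞) + 1 then τn (k n) ω else ⊤,
    ?_, ?_, ?_, ?_, ?_, ?_⟩
  · intro n t
    by_cases ht : t = ⊤
    · subst ht
      simp
    · have : {ω | (if τn (k n) ω ≤ (m : ℝ≥0∞) + 1 then τn (k n) ω else ⊤) ≤ t}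
          = {ω | τn (k n) ω ≤ min t ((m : ℝ≥0∞) + 1)} := by
        ext ω
        simp only [mem_ofPred_eq, le_min_iff]
        split_ifs with h <;> simp [h, ht]
      rw [this]
      exact hFmono (min_le_left _ _) _ (hτn_st _ _)
  · intro ω a b hab
    have h1 := hτn_mono ω (hk.monotone hab)
    dsimp only at h1 ⊢
    split_ifs with h2 h3 h3
    · exact h1
    · exact le_top
    · exact absurd (h1.trans h3) h2
    · exact le_rfl
  · intro ω
    by_cases h : τ ω < ⊤
    · simp only [hfin _ ω h, if_true]
      exact (hτn_tendsto ω).comp hk.tendsto_atTop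
    · have h' : τ ω = ⊤ := not_lt_top_iff.1 h
      have hmem : ω ∈ ⋃ n, {ω | (m : ℝ≥0∞) + 1 < τn n ω} := hτn_inf ▸ h'
      obtain ⟨N, hN⟩ := mem_iUnion.1 hmem
      rw [h']
      refine tendsto_const_nhds.congr' ?_
      filter_upwards [eventually_ge_atTop N] with n hn
      have h2 : (m : ℝ≥0∞) + 1 < τn (k n) ω :=
        lt_of_lt_of_le hN (hτn_mono ω (hn.trans (hk.id_le n)))
      rw [if_neg (not_le.2 h2)]
  · intro n ω
    dsimp only
    split_ifs with h
    · exact fun _ => ⟨hτn_gt _ _, h⟩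
    · exact fun h => absurd h (lt_irrefl _)
  · intro n ω h
    dsimp only
    rw [if_pos (hfin _ ω h)]
    exact hτn_lt _ ω h
  · intro n
    have : {ω | (if τn (k n) ω ≤ (m : ℝ≥0∞) + 1 then τn (k n) ω else ⊤) = ⊤}
        = {ω | (m : ℝ≥0∞) + 1 < τn (k n) ω} := by
      ext ω
      simp only [mem_ofPred_eq]
      split_ifs with h
      · exact iff_of_false (h.trans_lt hm1).ne (not_lt.2 h)
      · exact iff_of_true rfl (not_le.1 h)
    dsimp only
    rw [this]
    exact hkε n
end

section
/- Let T > 0 be finite and b : [0,T] → ℝ right-upper semicontinuous (for every t ∈ [0,T), limsup_{s↓↓t} b_s ≤ b_t) and dominated by some càdlàg function y̌ (b_t ≤ y̌_t for all t). Let S_t := {y ∈ ℝ | y ≥ b_t} and D(S) := {y ∈ D | y_t ≥ b_t for all t}. Then for every t ∈ (0,T], cl{y_{t-} | y ∈ D(S)} = {x ∈ ℝ | x ≥ ⃗b_t}, where ⃗b_t := limsup_{s↑↑t} b_s (and the right-hand side is all of ℝ if ⃗b_t = −∞). -/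
open MeasureTheory Filter Set Topology
open scoped ENNReal Classical

/-- A function `[0,T] → ℝ` (modelled on `ℝ`) is càdlàg: right-continuous on `[0,T)` with
left limits on `(0,T]`. -/
def IsCadlagOnR (T : ℝ) (y : ℝ → ℝ) : Prop :=
  (∀ t ∈ Set.Ico (0:ℝ) T, Tendsto y (𝓝[>] t) (𝓝 (y t))) ∧
  (∀ t ∈ Set.Ioc (0:ℝ) T, ∃ l, Tendsto y (𝓝[<] t) (𝓝 l))

/-- The left upper semicontinuous regularization `⃗b_t = limsup_{s↑↑t} b_s`, as an
extended real. -/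
noncomputable def lregE (b : ℝ → ℝ) (t : ℝ) : EReal :=
  Filter.limsup (fun s => (b s : EReal)) (𝓝[<] t)

/-- **Left limits of the càdlàg selections of an epigraphical constraint** (from
Example 8.1): for a right-usc `b` dominated by a càdlàg function, with
`D(S) = {y ∈ D | y ≥ b}`, one has `cl{y_{t-} | y ∈ D(S)} = {x | x ≥ ⃗b_t}` for every
`t ∈ (0,T]`. -/
theorem statement16 (T : ℝ) (hT : 0 < T) (b : ℝ → ℝ)
    (husc : ∀ t ∈ Set.Ico (0:ℝ) T,
      Filter.limsup (fun s => (b s : EReal)) (𝓝[>] t) ≤ (b t : EReal))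
    (ycheck : ℝ → ℝ) (hycheck : IsCadlagOnR T ycheck)
    (hdom : ∀ t ∈ Set.Icc (0:ℝ) T, b t ≤ ycheck t) :
    ∀ t ∈ Set.Ioc (0:ℝ) T,
      closure {x : ℝ | ∃ y : ℝ → ℝ,
        (IsCadlagOnR T y ∧ ∀ r ∈ Set.Icc (0:ℝ) T, b r ≤ y r) ∧ Function.leftLim y t = x} =
      {x : ℝ | lregE b t ≤ (x : EReal)} := by
  intro t ht
  apply Set.Subset.antisymm
  · apply closure_minimal
    · rintro x ⟨y, ⟨hy, hby⟩, rfl⟩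
      obtain ⟨l, hl⟩ := hy.2 t ht
      have hll : Function.leftLim y t = l := leftLim_eq_of_tendsto hl
      rw [hll]
      have h1 : Tendsto (fun s => (y s : EReal)) (𝓝[<] t) (𝓝 (l : EReal)) :=
        (continuous_coe_real_ereal.tendsto l).comp hl
      change Filter.limsup (fun s => (b s : EReal)) (𝓝[<] t) ≤ (l : EReal)
      rw [← h1.limsup_eq]
      refine Filter.limsup_le_limsup ?_
      filter_upwards [Ioo_mem_nhdsLT ht.1] with s hs
      exact EReal.coe_le_coe_iff.2 (hby s ⟨hs.1.le, hs.2.le.trans ht.2⟩)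
    · exact isClosed_Ici.preimage continuous_coe_real_ereal
  · intro x hx
    rw [Metric.mem_closure_iff]
    intro ε hε
    have hlt : lregE b t < ((x + ε / 2 : ℝ) : EReal) :=
      lt_of_le_of_lt hx (EReal.coe_lt_coe_iff.2 (by linarith))
    have hev := Filter.eventually_lt_of_limsup_lt hlt
    have hev2 := hev.and (Ioo_mem_nhdsLT ht.1)
    obtain ⟨c, hc, hcs⟩ := (mem_nhdsLT_iff_exists_Ioo_subset).1 hev2
    have hc' : c < t := hc
    obtain ⟨d, hd1, hd2⟩ := exists_between hc'
    set K := x + ε / 2 with hK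
    have hI : ∀ r, d ≤ r → r < t → b r < K := fun r h1 h2 =>
      EReal.coe_lt_coe_iff.1 (hcs ⟨hd1.trans_le h1, h2⟩).1
    set y : ℝ → ℝ := fun r => if d ≤ r ∧ r < t then K else ycheck r with hy
    have y1 : ∀ r, d ≤ r → r < t → y r = K := fun r h1 h2 => if_pos ⟨h1, h2⟩
    have y2 : ∀ r, r < d → y r = ycheck r := fun r h => if_neg (fun h' => by linarith [h'.1])
    have y3 : ∀ r, t ≤ r → y r = ycheck r := fun r h => if_neg (fun h' => by linarith [h'.2])
    have hleft : Tendsto y (𝓝[<] t) (𝓝 K) := by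
      apply tendsto_const_nhds.congr'
      filter_upwards [Ioo_mem_nhdsLT hd2] with s hs
      exact (y1 s hs.1.le hs.2).symm
    refine ⟨K, ⟨y, ⟨⟨?_, ?_⟩, ?_⟩, leftLim_eq_of_tendsto hleft⟩, ?_⟩
    · intro r hr
      rcases lt_or_ge r d with h | h
      · rw [y2 r h]
        apply (hycheck.1 r hr).congr'
        filter_upwards [Ioo_mem_nhdsGT h] with s hs
        exact (y2 s hs.2).symm
      rcases lt_or_ge r t with h' | h'
      · rw [y1 r h h']
        apply tendsto_const_nhds.congr'
        filter_upwards [Ioo_mem_nhdsGT h'] with s hs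
        exact (y1 s (h.trans hs.1.le) hs.2).symm
      · rw [y3 r h']
        apply (hycheck.1 r hr).congr'
        filter_upwards [self_mem_nhdsWithin] with s hs
        exact (y3 s (h'.trans (le_of_lt hs))).symm
    · intro r hr
      rcases le_or_gt r d with h | h
      · obtain ⟨l, hl⟩ := hycheck.2 r hr
        refine ⟨l, hl.congr' ?_⟩
        filter_upwards [self_mem_nhdsWithin] with s hs
        exact (y2 s (lt_of_lt_of_le hs h)).symm
      rcases le_or_gt r t with h' | h'
      · refine ⟨K, tendsto_const_nhds.congr' ?_⟩
        filter_upwards [Ioo_mem_nhdsLT h] with s hs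
        exact (y1 s hs.1.le (hs.2.trans_le h')).symm
      · obtain ⟨l, hl⟩ := hycheck.2 r hr
        refine ⟨l, hl.congr' ?_⟩
        filter_upwards [Ioo_mem_nhdsLT h'] with s hs
        exact (y3 s hs.1.le).symm
    · intro r hr
      rcases lt_or_ge r d with h | h
      · rw [y2 r h]; exact hdom r hr
      rcases lt_or_ge r t with h' | h'
      · rw [y1 r h h']; exact (hI r h h').le
      · rw [y3 r h']; exact hdom r hr
    · rw [Real.dist_eq, abs_lt, hK]
      constructor <;> linarith
end

section
/- Let T > 0 be finite, b : [0,T] → ℝ right-upper semicontinuous (limsup_{s↓↓t} b_s ≤ b_t for t ∈ [0,T)) and a : [0,T] → ℝ right-lower semicontinuous (liminf_{s↓↓t} a_s ≥ a_t for t ∈ [0,T)). Suppose there exists a càdlàg function ȳ with b_t < ȳ_t < a_t for all t ∈ [0,T] and ⃗b_t < ȳ_{t-} < a⃗_t for all t ∈ (0,T], where ⃗b_t := limsup_{s↑↑t} b_s and a⃗_t := liminf_{s↑↑t} a_s. Let S_t := {y ∈ ℝ | b_t ≤ y ≤ a_t} and D(S) := {y ∈ D | b_t ≤ y_t ≤ a_t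 for all t}. Then for every t ∈ (0,T], cl{y_{t-} | y ∈ D(S)} = {x ∈ ℝ | ⃗b_t ≤ x ≤ a⃗_t}. -/
open MeasureTheory Filter Set Topology
open scoped ENNReal Classical

/-- The left upper semicontinuous regularization `⃗b_t = limsup_{s↑↑t} b_s`, as an
extended real. -/
noncomputable def lregUsc (b : ℝ → ℝ) (t : ℝ) : EReal :=
  Filter.limsup (fun s => (b s : EReal)) (𝓝[<] t)

/-- The left lower semicontinuous regularization `a⃗_t = liminf_{s↑↑t} a_s`, as an
extended real. -/
noncomputable def lregLsc (a : ℝ → ℝ) (t : ℝ) : EReal :=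
  Filter.liminf (fun s => (a s : EReal)) (𝓝[<] t)

theorem aux_strict (T : ℝ) (b a : ℝ → ℝ)
    (ybar : ℝ → ℝ) (hybar : IsCadlagOnR T ybar)
    (hbetween : ∀ t ∈ Set.Icc (0:ℝ) T, b t < ybar t ∧ ybar t < a t)
    (t : ℝ) (ht : t ∈ Set.Ioc (0:ℝ) T) (x : ℝ)
    (h1 : lregUsc b t < (x : EReal)) (h2 : (x : EReal) < lregLsc a t) :
    ∃ y : ℝ → ℝ,
        (IsCadlagOnR T y ∧ ∀ r ∈ Set.Icc (0:ℝ) T, b r ≤ y r ∧ y r ≤ a r) ∧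
        Function.leftLim y t = x := by
  have e1 := Filter.eventually_lt_of_limsup_lt h1
  have e2 := Filter.eventually_lt_of_lt_liminf h2
  obtain ⟨l, hl, hlt⟩ := (mem_nhdsLT_iff_exists_Ioo_subset).1 (e1.and e2)
  obtain ⟨u, hu1, hu2⟩ := exists_between (max_lt (show l < t from hl) ht.1)
  have hlu : l < u := lt_of_le_of_lt (le_max_left _ _) hu1
  have left_lim : ∀ r, u < r → r ≤ t →
      Tendsto (fun s => if s ∈ Set.Ico u t then x else ybar s) (𝓝[<] r) (𝓝 x) := by
    intro r hr hrt
    refine tendsto_const_nhds.congr' ?_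
    filter_upwards [Ioo_mem_nhdsLT hr] with s hs
    rw [if_pos ⟨hs.1.le, hs.2.trans_le hrt⟩]
  refine ⟨fun s => if s ∈ Set.Ico u t then x else ybar s, ⟨⟨?_, ?_⟩, ?_⟩, ?_⟩
  · intro r hr
    by_cases hrI : r ∈ Set.Ico u t
    · simp only [if_pos hrI]
      refine tendsto_const_nhds.congr' ?_
      filter_upwards [Ioo_mem_nhdsGT hrI.2] with s hs
      rw [if_pos ⟨hrI.1.trans hs.1.le, hs.2⟩]
    · simp only [if_neg hrI]
      refine (hybar.1 r hr).congr' ?_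
      rcases lt_or_ge r u with h | h
      · filter_upwards [Ioo_mem_nhdsGT h] with s hs
        rw [if_neg (fun h' => absurd h'.1 (not_le.2 hs.2))]
      · have : t ≤ r := not_lt.1 (fun h' => hrI ⟨h, h'⟩)
        filter_upwards [self_mem_nhdsWithin] with s hs
        rw [if_neg (fun h' => absurd h'.2 (not_lt.2 (this.trans (le_of_lt hs))))]
  · intro r hr
    rcases lt_or_ge u r with h | h
    · rcases le_or_gt r t with h' | h'
      · exact ⟨x, left_lim r h h'⟩
      · obtain ⟨m, hm⟩ := hybar.2 r hr
        refine ⟨m, hm.congr' ?_⟩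
        filter_upwards [Ioo_mem_nhdsLT h'] with s hs
        rw [if_neg (fun h' => absurd h'.2 (not_lt.2 hs.1.le))]
    · obtain ⟨m, hm⟩ := hybar.2 r hr
      refine ⟨m, hm.congr' ?_⟩
      filter_upwards [self_mem_nhdsWithin] with s hs
      rw [if_neg (fun h' => absurd h'.1 (not_le.2 (lt_of_lt_of_le hs h)))]
  · intro r hr
    by_cases hrI : r ∈ Set.Ico u t
    · simp only [if_pos hrI]
      have := hlt ⟨hlu.trans_le hrI.1, hrI.2⟩
      exact ⟨(EReal.coe_lt_coe_iff.1 this.1).le, (EReal.coe_lt_coe_iff.1 this.2).le⟩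
    · simp only [if_neg hrI]
      exact ⟨(hbetween r hr).1.le, (hbetween r hr).2.le⟩
  · exact leftLim_eq_of_tendsto (left_lim t hu2 le_rfl)

/-- **Left limits of the càdlàg selections of a bid–ask spread constraint** (from
Example 8.2): for a right-usc `b` and right-lsc `a` with a càdlàg function `ȳ` strictly
between them (also in the left limits), with `D(S) = {y ∈ D | b ≤ y ≤ a}`, one has
`cl{y_{t-} | y ∈ D(S)} = {x | ⃗b_t ≤ x ≤ a⃗_t}` for every `t ∈ (0,T]`. -/
theorem statement17 (T : ℝ) (hT : 0 < T) (b a : ℝ → ℝ)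
    (hbusc : ∀ t ∈ Set.Ico (0:ℝ) T,
      Filter.limsup (fun s => (b s : EReal)) (𝓝[>] t) ≤ (b t : EReal))
    (halsc : ∀ t ∈ Set.Ico (0:ℝ) T,
      (a t : EReal) ≤ Filter.liminf (fun s => (a s : EReal)) (𝓝[>] t))
    (ybar : ℝ → ℝ) (hybar : IsCadlagOnR T ybar)
    (hbetween : ∀ t ∈ Set.Icc (0:ℝ) T, b t < ybar t ∧ ybar t < a t)
    (hbetweenleft : ∀ t ∈ Set.Ioc (0:ℝ) T,
      lregUsc b t < ((Function.leftLim ybar t : ℝ) : EReal) ∧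
      ((Function.leftLim ybar t : ℝ) : EReal) < lregLsc a t) :
    ∀ t ∈ Set.Ioc (0:ℝ) T,
      closure {x : ℝ | ∃ y : ℝ → ℝ,
        (IsCadlagOnR T y ∧ ∀ r ∈ Set.Icc (0:ℝ) T, b r ≤ y r ∧ y r ≤ a r) ∧
        Function.leftLim y t = x} =
      {x : ℝ | lregUsc b t ≤ (x : EReal) ∧ (x : EReal) ≤ lregLsc a t} := by
  intro t ht
  apply Set.Subset.antisymm
  · apply closure_minimal
    · rintro x ⟨y, ⟨hy, hyb⟩, rfl⟩
      obtain ⟨l, hl⟩ := hy.2 t ht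
      rw [leftLim_eq_of_tendsto hl]
      have hl' : Tendsto (fun s => (y s : EReal)) (𝓝[<] t) (𝓝 (l : EReal)) :=
        (continuous_coe_real_ereal.tendsto l).comp hl
      have hev : ∀ᶠ s in 𝓝[<] t, b s ≤ y s ∧ y s ≤ a s := by
        filter_upwards [Ioo_mem_nhdsLT ht.1] with s hs
        exact hyb s ⟨hs.1.le, hs.2.le.trans ht.2⟩
      constructor
      · rw [← hl'.limsup_eq]
        exact Filter.limsup_le_limsup (hev.mono fun s hs => EReal.coe_le_coe_iff.2 hs.1)
      · rw [← hl'.liminf_eq]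
        exact Filter.liminf_le_liminf (hev.mono fun s hs => EReal.coe_le_coe_iff.2 hs.2)
    · exact (isClosed_Icc (a := lregUsc b t) (b := lregLsc a t)).preimage
        continuous_coe_real_ereal
  · rintro x ⟨hx1, hx2⟩
    obtain ⟨hm1, hm2⟩ := hbetweenleft t ht
    have key := aux_strict T b a ybar hybar hbetween t ht
    rcases lt_trichotomy x (Function.leftLim ybar t) with h | h | h
    · refine closure_mono (s := Set.Ioo x (Function.leftLim ybar t)) ?_ ?_
      · intro z hz
        exact key z (hx1.trans_lt (EReal.coe_lt_coe_iff.2 hz.1))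
          ((EReal.coe_lt_coe_iff.2 hz.2).trans hm2)
      · rw [closure_Ioo h.ne]
        exact ⟨le_rfl, h.le⟩
    · subst h
      exact subset_closure (key _ hm1 hm2)
    · refine closure_mono (s := Set.Ioo (Function.leftLim ybar t) x) ?_ ?_
      · intro z hz
        exact key z (hm1.trans (EReal.coe_lt_coe_iff.2 hz.1))
          ((EReal.coe_lt_coe_iff.2 hz.2).trans_le hx2)
      · rw [closure_Ioo h.ne]
        exact ⟨h.le, le_rfl⟩
end

section
/- Let T > 0 be finite and let G, G̃ : [0,T] ⇒ ℝ^d be closed convex cone-valued mappings satisfying: (efficient friction) G_t ∩ (−G_t) = {0} and G̃_t ∩ (−G̃_t) = {0} for all t; and (regularity) G_{t,t+} = G_t for all t ∈ [0,T) and G_{t−,t} = G̃_t for all t ∈ (0,T], where G_{s,t} := cl cone(⋃_{r∈[s,t)} G_r), G_{s,t+} := ⋂_{ε>0} G_{s,t+ε}, and G_{s−,t} := ⋂_{ε>0} G_{s−ε,t} (with G_{0−,t} := G_{0,t}). Then the polar mapping S := G^*, S_t := {x ∈ ℝ^d | x·y ≤ 0 for all y ∈ G_t}, is right-inner semicontinuous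 with int S_t ≠ ∅ for all t, and ⃗S_t = G̃_t^* with int G̃_t^* ≠ ∅ for all t ∈ (0,T]. -/
open MeasureTheory Filter Set Topology
open scoped ENNReal Classical RealInnerProductSpace

/-- The polar cone `K* = {x | x·y ≤ 0 ∀ y ∈ K}`. -/
def polarCone {d : ℕ} (K : Set (Euc d)) : Set (Euc d) := {x | ∀ y ∈ K, ⟪x, y⟫ ≤ 0}

/-- The convex cone generated by a set: all finite nonnegative combinations. -/
def coneHull {d : ℕ} (A : Set (Euc d)) : Set (Euc d) :=
  {x | ∃ (n : ℕ) (c : Fin n → ℝ) (v : Fin n → Euc d),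
    (∀ i, 0 ≤ c i ∧ v i ∈ A) ∧ x = ∑ i, c i • v i}

/-- `G_{s,t} = cl cone {G_r | r ∈ [s,t)}` (within the time interval `[0,T]`). -/
noncomputable def Gst (T : ℝ) {d : ℕ} (G : ℝ → Set (Euc d)) (s t : ℝ) : Set (Euc d) :=
  closure (coneHull (⋃ r ∈ Set.Ico s t ∩ Set.Icc (0:ℝ) T, G r))

lemma aux_solid {d : ℕ} (K : Set (Euc d)) (hc : IsClosed K) (hconv : Convex ℝ K)
    (hcone : ∀ c : ℝ, 0 ≤ c → ∀ x ∈ K, c • x ∈ K) (hp : K ∩ (-K) = {0}) :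
    (interior (polarCone K)).Nonempty ∧
    ∃ (e : Euc d) (c : ℝ), 0 < c ∧ ∀ y ∈ K, ⟪e, y⟫ + c * ‖y‖ ≤ 0 := by
  have h0 : (0 : Euc d) ∈ K := by
    have : (0 : Euc d) ∈ K ∩ (-K) := by rw [hp]; rfl
    exact this.1
  have hconvP : Convex ℝ (polarCone K) := by
    intro x hx y hy a b ha hb _ z hz
    have h1 := hx z hz
    have h2 := hy z hz
    rw [inner_add_left, real_inner_smul_left, real_inner_smul_left]
    nlinarith
  have hmem : ∀ u : Euc d, (∀ w ∈ polarCone K, ⟪w, u⟫ ≤ 0) → u ∈ K := by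
    intro u hu
    by_contra hK
    obtain ⟨f, c, hf, hfu⟩ := geometric_hahn_banach_closed_point hconv hc hK
    have hc0 : 0 < c := by simpa using hf 0 h0
    have hw : (InnerProductSpace.toDual ℝ (Euc d)).symm f ∈ polarCone K := by
      intro y hy
      rw [InnerProductSpace.toDual_symm_apply]
      by_contra hpos
      push Not at hpos
      have := hf _ (hcone (c / f y) (by positivity) y hy)
      rw [map_smul, smul_eq_mul, div_mul_cancel₀ _ hpos.ne'] at this
      exact lt_irrefl _ this
    have := hu _ hw
    rw [InnerProductSpace.toDual_symm_apply] at this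
    linarith
  have hint : (interior (polarCone K)).Nonempty := by
    rw [hconvP.interior_nonempty_iff_affineSpan_eq_top]
    have h0P : (0 : Euc d) ∈ polarCone K := by
      intro y _; simp
    have hsp : Submodule.span ℝ (polarCone K) = ⊤ := by
      rw [← Submodule.orthogonal_eq_bot_iff, Submodule.eq_bot_iff]
      intro u hu
      rw [Submodule.mem_orthogonal] at hu
      have hu' : ∀ w ∈ polarCone K, ⟪w, u⟫ = 0 := fun w hw => hu w (Submodule.subset_span hw)
      have h1 : u ∈ K := hmem u fun w hw => (hu' w hw).le
      have h2 : -u ∈ K := hmem (-u) fun w hw => by rw [inner_neg_right, hu' w hw]; simp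
      have : u ∈ K ∩ (-K) := ⟨h1, h2⟩
      rw [hp] at this
      exact this
    have := affineSpan_insert_zero (k := ℝ) (polarCone K)
    rw [Set.insert_eq_of_mem h0P, hsp] at this
    apply SetLike.coe_injective
    rw [this]; rfl
  refine ⟨hint, ?_⟩
  obtain ⟨e, he⟩ := hint
  obtain ⟨r, hr, hball⟩ := Metric.isOpen_iff.1 isOpen_interior e he
  refine ⟨e, r / 2, by positivity, ?_⟩
  intro y hy
  by_cases hy0 : y = 0
  · simp [hy0]
  have hn : 0 < ‖y‖ := norm_pos_iff.2 hy0
  have hb : e + (r / 2 / ‖y‖) • y ∈ Metric.ball e r := by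
    rw [mem_ball_iff_norm, add_sub_cancel_left, norm_smul, Real.norm_of_nonneg (by positivity),
      div_mul_cancel₀ _ hn.ne']
    linarith
  have := interior_subset (hball hb) y hy
  rw [inner_add_left, real_inner_smul_left, real_inner_self_eq_norm_sq] at this
  have h3 : r / 2 / ‖y‖ * ‖y‖ ^ 2 = r / 2 * ‖y‖ := by field_simp
  linarith

lemma aux_compact_s18 {d : ℕ} (F : ℝ → Set (Euc d)) (hcl : ∀ ε, IsClosed (F ε)) (hm : Monotone F)
    (hsc : ∀ ε, ∀ c : ℝ, 0 ≤ c → ∀ x ∈ F ε, c • x ∈ F ε) (K : Set (Euc d))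
    (hK : (⋂ ε > (0:ℝ), F ε) = K) (z : Euc d) (a : ℝ)
    (hz : ∀ y ∈ K, y ≠ 0 → ⟪z, y⟫ + a * ‖y‖ < 0) :
    ∃ ε > (0:ℝ), ∀ y ∈ F ε, ⟪z, y⟫ + a * ‖y‖ ≤ 0 := by
  have hcomp : IsCompact (Metric.sphere (0 : Euc d) 1 ∩ {y | 0 ≤ ⟪z, y⟫ + a * ‖y‖}) := by
    apply (isCompact_sphere _ _).inter_right
    exact isClosed_le (by fun_prop) (by fun_prop)
  haveI : Nonempty {ε : ℝ // 0 < ε} := ⟨⟨1, one_pos⟩⟩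
  obtain ⟨⟨ε, hε⟩, h⟩ := hcomp.elim_directed_family_closed (fun i : {ε : ℝ // 0 < ε} => F i)
    (fun i => hcl i) (by
      rw [Set.eq_empty_iff_forall_notMem]
      rintro y ⟨⟨hy1, hy2⟩, hy3⟩
      have hyK : y ∈ K := by
        rw [← hK]
        simp only [mem_iInter] at hy3 ⊢
        intro ε hε
        exact hy3 ⟨ε, hε⟩
      have hy0 : y ≠ 0 := by
        rintro rfl
        simp at hy1
      have := hz y hyK hy0
      simp only [mem_setOf_eq] at hy2
      linarith) (by
      rintro ⟨i, hi⟩ ⟨j, hj⟩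
      exact ⟨⟨min i j, lt_min hi hj⟩, hm (min_le_left _ _), hm (min_le_right _ _)⟩)
  refine ⟨ε, hε, ?_⟩
  intro y hy
  by_contra hpos
  push Not at hpos
  have hy0 : y ≠ 0 := by
    rintro rfl
    simp at hpos
  have hn : 0 < ‖y‖ := norm_pos_iff.2 hy0
  have hmem : (‖y‖⁻¹ • y) ∈ (Metric.sphere (0 : Euc d) 1 ∩ {y | 0 ≤ ⟪z, y⟫ + a * ‖y‖}) ∩ F ε := by
    refine ⟨⟨?_, ?_⟩, hsc _ _ (by positivity) _ hy⟩
    · rw [mem_sphere_zero_iff_norm, norm_smul, norm_inv, norm_norm, inv_mul_cancel₀ hn.ne']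
    · simp only [mem_setOf_eq]
      rw [norm_smul, norm_inv, norm_norm, real_inner_smul_right]
      have : ‖y‖⁻¹ * ⟪z, y⟫ + a * (‖y‖⁻¹ * ‖y‖) = ‖y‖⁻¹ * (⟪z, y⟫ + a * ‖y‖) := by ring
      rw [this]
      positivity
  exact (Set.eq_empty_iff_forall_notMem.1 h _) hmem

lemma aux_coneHull_mono {d : ℕ} {A B : Set (Euc d)} (h : A ⊆ B) : coneHull A ⊆ coneHull B := by
  rintro x ⟨n, c, v, hv, rfl⟩
  exact ⟨n, c, v, fun i => ⟨(hv i).1, h (hv i).2⟩, rfl⟩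

lemma aux_Gst_mono (T : ℝ) {d : ℕ} (G : ℝ → Set (Euc d)) {s t s' t' : ℝ} (h1 : s' ≤ s)
    (h2 : t ≤ t') : Gst T G s t ⊆ Gst T G s' t' := by
  apply closure_mono
  apply aux_coneHull_mono
  apply Set.biUnion_subset_biUnion_left
  rintro r ⟨hr, hr'⟩
  exact ⟨⟨h1.trans hr.1, hr.2.trans_le h2⟩, hr'⟩

lemma aux_Gst_smul (T : ℝ) {d : ℕ} (G : ℝ → Set (Euc d)) (s t : ℝ) (c : ℝ) (hc : 0 ≤ c)
    (x : Euc d) (hx : x ∈ Gst T G s t) : c • x ∈ Gst T G s t := by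
  refine map_mem_closure (f := fun x => c • x) (by fun_prop) hx ?_
  rintro y ⟨n, a, v, hv, rfl⟩
  refine ⟨n, fun i => c * a i, v, fun i => ⟨mul_nonneg hc (hv i).1, (hv i).2⟩, ?_⟩
  simp [Finset.smul_sum, mul_smul]

lemma aux_subset_Gst (T : ℝ) {d : ℕ} (G : ℝ → Set (Euc d)) (s t r : ℝ) (hr : r ∈ Set.Ico s t)
    (hr' : r ∈ Set.Icc (0:ℝ) T) : G r ⊆ Gst T G s t := by
  intro x hx
  apply subset_closure
  refine ⟨1, fun _ => 1, fun _ => x, fun i => ⟨zero_le_one, ?_⟩, by simp⟩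
  exact Set.mem_biUnion (show r ∈ Set.Ico s t ∩ Set.Icc (0:ℝ) T from ⟨hr, hr'⟩) hx

lemma aux_polar_Gst (T : ℝ) {d : ℕ} (G : ℝ → Set (Euc d)) (s t : ℝ) (z : Euc d)
    (hz : ∀ r ∈ Set.Ico s t, r ∈ Set.Icc (0:ℝ) T → z ∈ polarCone (G r)) :
    z ∈ polarCone (Gst T G s t) := by
  have hcl : IsClosed {y : Euc d | ⟪z, y⟫ ≤ 0} := isClosed_le (by fun_prop) (by fun_prop)
  have : Gst T G s t ⊆ {y : Euc d | ⟪z, y⟫ ≤ 0} := by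
    apply closure_minimal _ hcl
    rintro y ⟨n, a, v, hv, rfl⟩
    simp only [mem_setOf_eq, inner_sum, real_inner_smul_right]
    apply Finset.sum_nonpos
    intro i _
    obtain ⟨h1, h2⟩ := hv i
    simp only [mem_iUnion] at h2
    obtain ⟨r, hr, h3⟩ := h2
    exact mul_nonpos_of_nonneg_of_nonpos h1 (hz r hr.1 hr.2 _ h3)
  exact this

/-- approximating a point of the polar of `K` by one in the polar of `F ε`. -/
lemma aux_approx {d : ℕ} (F : ℝ → Set (Euc d)) (hcl : ∀ ε, IsClosed (F ε)) (hm : Monotone F)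
    (hsc : ∀ ε, ∀ c : ℝ, 0 ≤ c → ∀ x ∈ F ε, c • x ∈ F ε) (K : Set (Euc d))
    (hK : (⋂ ε > (0:ℝ), F ε) = K)
    (hc : IsClosed K) (hconv : Convex ℝ K)
    (hcone : ∀ c : ℝ, 0 ≤ c → ∀ x ∈ K, c • x ∈ K) (hp : K ∩ (-K) = {0})
    (x : Euc d) (hx : x ∈ polarCone K) (η : ℝ) (hη : 0 < η) :
    ∃ ε > (0:ℝ), ∃ x' ∈ polarCone (F ε), dist x' x < η := by
  obtain ⟨-, e, c, hc0, he⟩ := aux_solid K hc hconv hcone hp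
  obtain ⟨k, hk, hk'⟩ : ∃ k : ℝ, 0 < k ∧ k * ‖e‖ < η := by
    refine ⟨η / (‖e‖ + 1), by positivity, ?_⟩
    rw [div_mul_eq_mul_div, div_lt_iff₀ (by positivity)]
    nlinarith
  obtain ⟨ε, hε, h⟩ := aux_compact_s18 F hcl hm hsc K hK (x + k • e) 0 (by
    intro y hy hy0
    have h1 := hx y hy
    have h2 := he y hy
    have hn : 0 < ‖y‖ := norm_pos_iff.2 hy0
    rw [inner_add_left, real_inner_smul_left]
    have : 0 < c * ‖y‖ := by positivity
    nlinarith)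
  refine ⟨ε, hε, x + k • e, ?_, ?_⟩
  · intro y hy
    simpa using h y hy
  · rw [dist_eq_norm, add_sub_cancel_left, norm_smul, Real.norm_of_nonneg hk.le]
    exact hk'

lemma aux_seq (t : ℝ) (P : ℝ → Prop) (h : ∀ ε > (0:ℝ), ∃ s, t - ε < s ∧ s < t ∧ 0 ≤ s ∧ P s) :
    ∃ s : ℕ → ℝ, SeqToLeft t s ∧ ∀ n, P (s n) := by
  have h' : ∀ (n : ℕ) (r : {r : ℝ // r < t ∧ 0 ≤ r ∧ P r}),
      ∃ q : {r : ℝ // r < t ∧ 0 ≤ r ∧ P r}, r.1 < q.1 ∧ t - 1 / ((n : ℝ) + 1) < q.1 := by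
    rintro n ⟨r, hr⟩
    obtain ⟨s, h1, h2, h3⟩ := h (min (t - r) (1 / ((n : ℝ) + 1)))
      (lt_min (by linarith [hr.1]) (by positivity))
    refine ⟨⟨s, h2, h3⟩, ?_, ?_⟩
    · have := min_le_left (t - r) (1 / ((n : ℝ) + 1))
      simp only
      linarith
    · have := min_le_right (t - r) (1 / ((n : ℝ) + 1))
      simp only
      linarith
  choose g hg1 hg2 using h'
  obtain ⟨s0, -, h2, h3⟩ := h 1 one_pos
  let q : ℕ → {r : ℝ // r < t ∧ 0 ≤ r ∧ P r} := fun n => Nat.rec ⟨s0, h2, h3⟩ (fun n r => g n r) n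
  have hq : ∀ n, q (n + 1) = g n (q n) := fun n => rfl
  refine ⟨fun n => (q n).1, ⟨?_, fun n => ⟨(q n).2.2.1, (q n).2.1⟩, ?_⟩, fun n => (q n).2.2.2⟩
  · apply strictMono_nat_of_lt_succ
    intro n
    rw [hq]
    exact hg1 _ _
  · rw [← tendsto_add_atTop_iff_nat 1]
    have hlim : Tendsto (fun n : ℕ => t - 1 / ((n : ℝ) + 1)) atTop (𝓝 t) := by
      simpa using tendsto_const_nhds.sub (tendsto_one_div_add_atTop_nhds_zero_nat (𝕜 := ℝ))
    refine tendsto_of_tendsto_of_tendsto_of_le_of_le hlim tendsto_const_nhds ?_ ?_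
    · intro n
      simp only [hq]
      exact (hg2 _ _).le
    · intro n
      exact (q (n + 1)).2.1.le

/-- **The Campi–Schachermayer model satisfies the currency market assumptions**
(Example 8.4): under efficient friction and the regularity hypotheses
`G_{t,t+} = G_t`, `G_{t-,t} = G̃_t`, the polar mapping `S = G*` is right-inner
semicontinuous and solid, and `⃗S_t = G̃_t*` is solid. -/
theorem statement18 {d : ℕ} (T : ℝ) (hT : 0 < T)
    (G Gt : ℝ → Set (Euc d))
    (hG : ∀ t ∈ Set.Icc (0:ℝ) T, IsClosed (G t) ∧ Convex ℝ (G t) ∧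
      ∀ c : ℝ, 0 ≤ c → ∀ x ∈ G t, c • x ∈ G t)
    (hGt : ∀ t ∈ Set.Icc (0:ℝ) T, IsClosed (Gt t) ∧ Convex ℝ (Gt t) ∧
      ∀ c : ℝ, 0 ≤ c → ∀ x ∈ Gt t, c • x ∈ Gt t)
    -- efficient friction
    (hef : ∀ t ∈ Set.Icc (0:ℝ) T, G t ∩ (-G t) = {0} ∧ Gt t ∩ (-Gt t) = {0})
    -- regularity hypotheses
    (hreg1 : ∀ t ∈ Set.Icc (0:ℝ) T, (⋂ ε > (0:ℝ), Gst T G t (t + ε)) = G t)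
    (hreg2 : ∀ t ∈ Set.Ioc (0:ℝ) T, (⋂ ε > (0:ℝ), Gst T G (t - ε) t) = Gt t) :
    RightIscSV T (fun t => polarCone (G t)) ∧
    (∀ t ∈ Set.Icc (0:ℝ) T, (interior (polarCone (G t))).Nonempty) ∧
    (∀ t ∈ Set.Ioc (0:ℝ) T,
      leftLiminfSV (fun t => polarCone (G t)) t = polarCone (Gt t) ∧
      (interior (polarCone (Gt t))).Nonempty) := by
  have hR : ∀ t, Monotone (fun ε => Gst T G t (t + ε)) := fun t a b hab =>
    aux_Gst_mono T G le_rfl (by linarith)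
  have hL : ∀ t, Monotone (fun ε => Gst T G (t - ε) t) := fun t a b hab =>
    aux_Gst_mono T G (by linarith) le_rfl
  refine ⟨?_, ?_, ?_⟩
  · intro t ht x hx ε hε
    obtain ⟨h1, h2, h3⟩ := hG t ht
    obtain ⟨δ, hδ, x', hx', hd⟩ := aux_approx _ (fun _ => isClosed_closure) (hR t)
      (fun _ => aux_Gst_smul T G _ _) (G t) (hreg1 t ht) h1 h2 h3 (hef t ht).1 x hx ε hε
    refine ⟨δ, hδ, fun s hs hts hst => ⟨x', ?_, hd⟩⟩
    exact fun y hy => hx' y (aux_subset_Gst T G _ _ s ⟨hts, hst⟩ hs hy)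
  · intro t ht
    obtain ⟨h1, h2, h3⟩ := hG t ht
    exact (aux_solid _ h1 h2 h3 (hef t ht).1).1
  · intro t ht
    have ht' : t ∈ Set.Icc (0:ℝ) T := ⟨ht.1.le, ht.2⟩
    obtain ⟨h1, h2, h3⟩ := hGt t ht'
    have hp := (hef t ht').2
    obtain ⟨hint, e, c, hc0, he⟩ := aux_solid _ h1 h2 h3 hp
    refine ⟨?_, hint⟩
    ext x
    constructor
    · intro hx y hy
      have hev : ∀ η > (0:ℝ), ∃ ε > (0:ℝ), ∀ s, t - ε < s → s < t → 0 ≤ s →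
          Metric.infDist x (polarCone (G s)) < η := by
        intro η hη
        by_contra hcon
        push Not at hcon
        obtain ⟨s, hs, hs'⟩ := aux_seq t (fun s => η ≤ Metric.infDist x (polarCone (G s)))
          (fun ε hε => by
            obtain ⟨s, a, b, c, d⟩ := hcon ε hε
            exact ⟨s, a, b, c, d⟩)
        have h4 := ge_of_tendsto' (hx s hs) hs'
        linarith
      obtain ⟨δ, hδ, hδe⟩ := aux_compact_s18 _ (fun _ => isClosed_closure) (hL t)
        (fun _ => aux_Gst_smul T G _ _) (Gt t) (hreg2 t ht) e (c / 2) (by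
          intro y hy hy0
          have := he y hy
          have hn : 0 < ‖y‖ := norm_pos_iff.2 hy0
          nlinarith)
      have key : ∀ k > (0:ℝ), ⟪x + k • e, y⟫ ≤ 0 := by
        intro k hk
        obtain ⟨ε, hε, hs⟩ := hev (k * (c / 2)) (by positivity)
        have hyG : y ∈ Gst T G (t - min δ ε / 2) t := by
          rw [← hreg2 t ht] at hy
          simp only [mem_iInter] at hy
          exact hy _ (by have := lt_min hδ hε; positivity)
        refine aux_polar_Gst T G (t - min δ ε / 2) t (x + k • e) ?_ y hyG
        intro r hr hr' w hw
        have hm := lt_min hδ hε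
        have hm1 := min_le_left δ ε
        have hm2 := min_le_right δ ε
        have hlt := hs r (by linarith [hr.1]) hr.2 hr'.1
        rw [Metric.infDist_lt_iff ⟨0, fun y _ => by simp⟩] at hlt
        obtain ⟨x', hx', hd⟩ := hlt
        have hew := hδe w (aux_subset_Gst T G _ _ r ⟨by linarith [hr.1], hr.2⟩ hr' hw)
        have h5 := hx' w hw
        have h6 : ⟪x - x', w⟫ ≤ k * (c / 2) * ‖w‖ := by
          refine (real_inner_le_norm _ _).trans ?_
          rw [dist_eq_norm] at hd
          gcongr
        rw [inner_sub_left] at h6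
        rw [inner_add_left, real_inner_smul_left]
        nlinarith
      have hlim : Tendsto (fun k : ℝ => ⟪x + k • e, y⟫) (𝓝[>] 0) (𝓝 ⟪x, y⟫) := by
        have hcont : Continuous (fun k : ℝ => ⟪x + k • e, y⟫) := by fun_prop
        have := hcont.tendsto 0
        simp only [zero_smul, add_zero] at this
        exact this.mono_left nhdsWithin_le_nhds
      exact le_of_tendsto hlim (by
        filter_upwards [self_mem_nhdsWithin] with k hk using key k hk)
    · intro hx s hs
      rw [Metric.tendsto_atTop]
      intro η hη
      obtain ⟨δ, hδ, x', hx', hd⟩ := aux_approx _ (fun _ => isClosed_closure) (hL t)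
        (fun _ => aux_Gst_smul T G _ _) (Gt t) (hreg2 t ht) h1 h2 h3 hp x hx η hη
      obtain ⟨-, hs2, hs3⟩ := hs
      obtain ⟨N, hN⟩ := eventually_atTop.1 (hs3.eventually (lt_mem_nhds (show t - δ < t by linarith)))
      refine ⟨N, fun n hn => ?_⟩
      rw [Real.dist_eq, sub_zero, abs_of_nonneg Metric.infDist_nonneg]
      refine (Metric.infDist_le_dist_of_mem (y := x') ?_).trans_lt (by rwa [dist_comm])
      intro y hy
      exact hx' y (aux_subset_Gst T G _ _ (s n) ⟨(hN n hn).le, (hs2 n).2⟩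
        ⟨(hs2 n).1, (hs2 n).2.le.trans ht.2⟩ hy)
end

section
/- Let T > 0 be finite and Γ : [0,T] ⇒ ℝ^d a closed convex-valued, right-inner semicontinuous mapping such that int Γ_t ≠ ∅ for all t ∈ [0,T] and int ⃗Γ_t ≠ ∅ for all t ∈ (0,T]. Then Γ admits a càdlàg selection: there exists a càdlàg function y : [0,T] → ℝ^d with y_t ∈ Γ_t for all t ∈ [0,T]. -/
open MeasureTheory Filter Set Topology
open scoped ENNReal Classical

lemma aux_core {d : ℕ} {Γ : ℝ → Set (Euc d)} {l : Filter ℝ} {A : Set (Euc d)} {x : Euc d}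
    (hx : x ∈ interior A)
    (hcl : ∀ᶠ s in l, IsClosed (Γ s) ∧ Convex ℝ (Γ s))
    (hA : ∀ a ∈ A, ∀ ε > (0:ℝ), ∀ᶠ s in l, ∃ x' ∈ Γ s, dist x' a < ε) :
    ∀ᶠ s in l, x ∈ Γ s := by
  rw [mem_interior_iff_mem_nhds, Metric.nhds_basis_closedBall.mem_iff] at hx
  obtain ⟨r, hr, hrA⟩ := hx
  obtain ⟨F, hFs, hFf, hF⟩ := (isCompact_closedBall x r).finite_cover_balls
    (show 0 < r / 4 by positivity)
  have h1 : ∀ᶠ s in l, ∀ a ∈ F, ∃ x' ∈ Γ s, dist x' a < r / 4 :=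
    (hFf.eventually_all).2 fun a ha => hA a (hrA (hFs ha)) _ (by positivity)
  have h2 := hA x (hrA (Metric.mem_closedBall_self hr.le)) 1 one_pos
  filter_upwards [h1, h2, hcl] with s hs1 hs2 hs3
  obtain ⟨x0, hx0, -⟩ := hs2
  obtain ⟨p, hp, hpm⟩ := exists_norm_eq_iInf_of_complete_convex ⟨x0, hx0⟩
    hs3.1.isComplete hs3.2 x
  rw [norm_eq_iInf_iff_real_inner_le_zero hs3.2 hp] at hpm
  by_contra hxn
  have hv : x - p ≠ 0 := by
    intro h
    rw [sub_eq_zero] at h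
    exact hxn (h ▸ hp)
  have hvp : 0 < ‖x - p‖ := norm_pos_iff.2 hv
  set v := x - p with hvdef
  set e : Euc d := (r / ‖v‖) • v with he
  have hen : ‖e‖ = r := by
    rw [he, norm_smul, Real.norm_of_nonneg (by positivity)]
    field_simp
  have hmem : x + e ∈ Metric.closedBall x r := by
    simp [hen]
  obtain ⟨a, ha, hae⟩ := mem_iUnion₂.1 (hF hmem)
  obtain ⟨x', hx', hx'a⟩ := hs1 a ha
  have hd : ‖x' - (x + e)‖ ≤ r / 2 := by
    rw [← dist_eq_norm]
    have := dist_triangle x' a (x + e)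
    rw [Metric.mem_ball, dist_comm] at hae
    linarith
  have h3 := hpm x' hx'
  have h4 : x' - p = v + e + (x' - (x + e)) := by rw [hvdef]; abel
  rw [h4, inner_add_right, inner_add_right, real_inner_self_eq_norm_sq, he,
    inner_smul_right, real_inner_self_eq_norm_sq, ← he] at h3
  have h5 := neg_le_of_abs_le (abs_real_inner_le_norm v (x' - (x + e)))
  have h6 : ‖v‖ * ‖x' - (x + e)‖ ≤ ‖v‖ * (r / 2) := by gcongr
  have h7 : r / ‖v‖ * ‖v‖ ^ 2 = r * ‖v‖ := by field_simp
  nlinarith [mul_pos hr hvp]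

lemma aux_left {d : ℕ} {Γ : ℝ → Set (Euc d)} {t : ℝ} (ht : 0 < t)
    (hne : ∀ s, 0 ≤ s → s < t → (Γ s).Nonempty)
    {a : Euc d} (ha : a ∈ leftLiminfSV Γ t) {ε : ℝ} (hε : 0 < ε) :
    ∀ᶠ s in 𝓝[<] t, ∃ x' ∈ Γ s, dist x' a < ε := by
  by_contra hcon
  rw [Filter.not_eventually] at hcon
  have hfr : ∀ u < t, ∃ s ∈ Ioo u t, 0 < s ∧ ¬ ∃ x' ∈ Γ s, dist x' a < ε := by
    intro u hu
    have h1 : Ioo (max u 0) t ∈ 𝓝[<] t := Ioo_mem_nhdsLT (max_lt hu ht)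
    obtain ⟨s, hs, hs'⟩ := (hcon.and_eventually h1).exists
    exact ⟨s, ⟨(le_max_left _ _).trans_lt hs'.1, hs'.2⟩, (le_max_right _ _).trans_lt hs'.1, hs⟩
  set B := {s | 0 < s ∧ s < t ∧ ¬ ∃ x' ∈ Γ s, dist x' a < ε} with hB
  have hlub : IsLUB B t := by
    refine ⟨fun s hs => hs.2.1.le, fun u hu => ?_⟩
    by_contra! h
    obtain ⟨s, hs, hs0, hs'⟩ := hfr u h
    exact absurd (hu ⟨hs0, hs.2, hs'⟩) (not_le.2 hs.1)
  have hnB : B.Nonempty := by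
    obtain ⟨s, hs, hs0, hs'⟩ := hfr 0 ht
    exact ⟨s, hs0, hs.2, hs'⟩
  obtain ⟨u, hu1, hu2, hu3, hu4⟩ := hlub.exists_seq_strictMono_tendsto_of_notMem
    (fun h => lt_irrefl _ h.2.1) hnB
  have h := ha u ⟨hu1, fun n => ⟨(hu4 n).1.le, hu2 n⟩, hu3⟩
  obtain ⟨n, hn⟩ := (h.eventually (gt_mem_nhds hε)).exists
  obtain ⟨y, hy, hy'⟩ := (Metric.infDist_lt_iff (hne _ (hu4 n).1.le (hu2 n))).1 hn
  exact (hu4 n).2.2 ⟨y, hy, by rwa [dist_comm]⟩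

lemma aux_glue {d : ℕ} {t u : ℝ} {y : ℝ → Euc d} (hy : IsCadlagOn t y) (z : Euc d) :
    IsCadlagOn u (fun s => if s < t then y s else z) := by
  refine ⟨fun s hs => ?_, fun s hs => ?_⟩
  · by_cases h : s < t
    · simp only [h, if_true]
      refine (hy.1 s ⟨hs.1, h⟩).congr' ?_
      filter_upwards [Ioo_mem_nhdsGT h] with r hr
      simp [hr.2]
    · simp only [h, if_false]
      refine tendsto_const_nhds.congr' ?_
      filter_upwards [self_mem_nhdsWithin] with r hr
      rw [if_neg (not_lt.2 ((not_lt.1 h).trans (le_of_lt hr)))]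
  · by_cases h : s ≤ t
    · obtain ⟨l, hl⟩ := hy.2 s ⟨hs.1, h⟩
      refine ⟨l, hl.congr' ?_⟩
      filter_upwards [self_mem_nhdsWithin] with r hr
      rw [if_pos (lt_of_lt_of_le hr h)]
    · refine ⟨z, tendsto_const_nhds.congr' ?_⟩
      filter_upwards [Ioo_mem_nhdsLT (not_le.1 h)] with r hr
      rw [if_neg (not_lt.2 hr.1.le)]

/-- **Existence of a càdlàg selection** (from the proof of Theorem 7.2): a closed
convex-valued, right-inner semicontinuous mapping `Γ` with `int Γ_t ≠ ∅` on `[0,T]` and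
`int ⃗Γ_t ≠ ∅` on `(0,T]` admits a càdlàg selection. -/
theorem statement19 {d : ℕ} (T : ℝ) (hT : 0 < T) (Γ : ℝ → Set (Euc d))
    (hval : ∀ t ∈ Set.Icc (0:ℝ) T, IsClosed (Γ t) ∧ Convex ℝ (Γ t))
    (hisc : RightIscSV T Γ)
    (hsolid : ∀ t ∈ Set.Icc (0:ℝ) T, (interior (Γ t)).Nonempty)
    (hsolidvec : ∀ t ∈ Set.Ioc (0:ℝ) T, (interior (vecSV Γ t)).Nonempty) :
    ∃ y : ℝ → Euc d, IsCadlagOn T y ∧ ∀ t ∈ Set.Icc (0:ℝ) T, y t ∈ Γ t := by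
  have hR : ∀ c ∈ Icc (0:ℝ) T, ∃ δ > (0:ℝ), ∃ z, ∀ s ∈ Icc (0:ℝ) T, c ≤ s → s < c + δ → z ∈ Γ s := by
    intro c hc
    obtain ⟨z, hz⟩ := hsolid c hc
    have h := aux_core (l := 𝓝[Icc c T] c) hz
      (by
        filter_upwards [self_mem_nhdsWithin] with s hs
        exact hval s ⟨hc.1.trans hs.1, hs.2⟩)
      (by
        intro a ha ε hε
        obtain ⟨δ, hδ, h⟩ := hisc c hc a ha ε hε
        filter_upwards [self_mem_nhdsWithin, mem_nhdsWithin_of_mem_nhds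
          (Iio_mem_nhds (show c < c + δ by linarith))] with s hs hs2
        exact h s ⟨hc.1.trans hs.1, hs.2⟩ hs.1 hs2)
    rw [Metric.nhdsWithin_basis_ball.eventually_iff] at h
    obtain ⟨δ, hδ, h⟩ := h
    refine ⟨δ, hδ, z, fun s hs h1 h2 => h ⟨?_, h1, hs.2⟩⟩
    rw [Metric.mem_ball, Real.dist_eq, abs_lt]
    constructor <;> linarith
  have hL : ∀ c ∈ Icc (0:ℝ) T, ∃ δ > (0:ℝ), ∃ z, ∀ s ∈ Icc (0:ℝ) T, c - δ < s → s < c → z ∈ Γ s := by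
    intro c hc
    rcases hc.1.eq_or_lt with h0 | h0
    · exact ⟨1, one_pos, 0, fun s hs _ h => absurd hs.1 (by linarith)⟩
    obtain ⟨z, hz⟩ := hsolidvec c ⟨h0, hc.2⟩
    rw [vecSV, if_neg (not_le.2 h0)] at hz
    have h := aux_core (l := 𝓝[<] c) hz
      (by
        filter_upwards [Ioo_mem_nhdsLT h0] with s hs
        exact hval s ⟨hs.1.le, hs.2.le.trans hc.2⟩)
      (by
        intro a ha ε hε
        exact aux_left h0 (fun s h1 h2 => (hsolid s ⟨h1, h2.le.trans hc.2⟩).mono interior_subset)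
          ha hε)
    rw [Metric.nhdsWithin_basis_ball.eventually_iff] at h
    obtain ⟨δ, hδ, h⟩ := h
    refine ⟨δ, hδ, z, fun s hs h1 h2 => h ⟨?_, h2⟩⟩
    rw [Metric.mem_ball, Real.dist_eq, abs_lt]
    constructor <;> linarith
  set S := {t | t ∈ Icc (0:ℝ) T ∧
    ∃ y : ℝ → Euc d, IsCadlagOn t y ∧ ∀ s ∈ Set.Icc (0:ℝ) t, y s ∈ Γ s} with hS
  have h0S : (0:ℝ) ∈ S := by
    obtain ⟨z, hz⟩ := hsolid 0 ⟨le_rfl, hT.le⟩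
    refine ⟨⟨le_rfl, hT.le⟩, fun _ => z, ⟨fun t _ => tendsto_const_nhds,
      fun t _ => ⟨z, tendsto_const_nhds⟩⟩, fun s hs => ?_⟩
    have : s = 0 := le_antisymm hs.2 hs.1
    rw [this]
    exact interior_subset hz
  have hbdd : BddAbove S := ⟨T, fun t ht => ht.1.2⟩
  set c := sSup S with hcdef
  have hc : c ∈ Icc (0:ℝ) T := ⟨le_csSup hbdd h0S, csSup_le ⟨0, h0S⟩ fun t ht => ht.1.2⟩
  obtain ⟨δ, hδ, z, hz⟩ := hR c hc
  obtain ⟨δ', hδ', x, hx⟩ := hL c hc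
  obtain ⟨t, htS, ht⟩ := exists_lt_of_lt_csSup ⟨0, h0S⟩ (show c - δ' < sSup S by linarith)
  have htc : t ≤ c := le_csSup hbdd htS
  obtain ⟨ht0, y, hy, hys⟩ := htS
  have key : ∀ u ∈ Icc (0:ℝ) T, u < c + δ → u ∈ S := by
    intro u hu huc
    refine ⟨hu, _, aux_glue (aux_glue (u := c) hy x) z, fun s hs => ?_⟩
    have hsT : s ∈ Icc (0:ℝ) T := ⟨hs.1, hs.2.trans hu.2⟩
    split_ifs with h1 h2
    · exact hys s ⟨hs.1, h2.le⟩
    · exact hx s hsT (by linarith) h1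
    · exact hz s hsT (not_lt.1 h1) (by linarith [hs.2])
  have hcT : c = T := by
    by_contra hne
    have hlt : c < T := lt_of_le_of_ne hc.2 hne
    have h1 : c < min (c + δ / 2) T := lt_min (by linarith) hlt
    have h2 := key (min (c + δ / 2) T) ⟨hc.1.trans h1.le, min_le_right _ _⟩
      ((min_le_left _ _).trans_lt (by linarith))
    exact absurd (le_csSup hbdd h2) (not_le.2 h1)
  exact (key T ⟨hT.le, le_rfl⟩ (by linarith)).2
end
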